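/- There exists an absolute constant C₅ > 0 such that for every δ ∈ (0, 1/2] there exists y₀ with the following property. Let y ≥ y₀ be a real number, V a finite set with #V ≤ y, s an integer with 1 ≤ s ≤ y, and for each i ∈ {1,…,s} let 𝐞_i be a random subset of V, given by a probability mass function μ_i on the subsets of V. Assume: (1) every subset in the support of μ_i has at most (ln y)^{1/2}/ln ln y elements, for each i; (2) for every v ∈ V and every i, P(v ∈ 𝐞_i) ≤ y^{−1/2−1/100}; (3) for all distinct v, v' ∈ V, ∑_{i=1}^s P(v ∈ 𝐞_i and v' ∈ 𝐞_i) ≤ y^{−1/2}; (4) there exist reals C₄ and η with 10^{2δ} ≤ C₄ ≤ 100 and η ≥ 1/((ln y)^δ·ln ln y) such that |∑_{i=1}^s P(v ∈ 𝐞_i) − C₄| ≤ η for every v ∈ V. Then there exist subsets e_i ⊆ V with μ_i(e_i) > 0 for each i, such that #(V \ ⋃_{i=1}^s e_i) ≤ C₅·η·#V. -/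

import Mathlib

open scoped Classical

/-!
The proof is a Rödl nibble. The indices are split among `m` rounds by a balanced labelling, so that
up to a small error every vertex receives in round `k` the same fraction of its total weight, this
fraction being proportional to `b ^ (-k)`. In round `k` the sets are chosen independently among
those made of vertices which survived the previous rounds, with the weights of the surviving sets
boosted by the inverse survival probability `b ^ (k * #e)`. A vertex whose boosted weight is
slightly below `log b` then survives the round with probability about `1 / b`; sets through a vertex
of larger weight are suppressed, and the missing weight is supplied by deleting single vertices
independently, so that each vertex survives with probability exactly `1 / b`. Hence survival in
different vertices stays nearly independent, which makes second moments computable and shows that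
the boosted weights are concentrated. The expected number of vertices lost to deletions is, up to a
negligible error, at most the proportion `2 * η` allowed by the fluctuation of the total weights,
and after `m` rounds only a proportion `b ^ (-m) ≤ η` of the vertices survives.
-/

namespace RandomCovering

open Finset

section General

variable {Ω V κ ι : Type*}

theorem exists_pos_of_mem_stdSimplex [Fintype Ω] {p : Ω → ℝ} (hp : p ∈ stdSimplex ℝ Ω) :
    ∃ ω, 0 < p ω := by
  obtain ⟨ω, -, hω⟩ := exists_ne_zero_of_sum_ne_zero (hp.2.trans_ne one_ne_zero)
  exact ⟨ω, (hp.1 ω).lt_of_ne' hω⟩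

theorem exists_le_of_sum_mul_le [Fintype Ω] {p X : Ω → ℝ} (hp : p ∈ stdSimplex ℝ Ω) {K : ℝ}
    (h : ∑ ω, p ω * X ω ≤ K) : ∃ ω, p ω ≠ 0 ∧ X ω ≤ K := by
  by_contra! hX
  obtain ⟨ω, hω⟩ := exists_pos_of_mem_stdSimplex hp
  have : ∑ ω, p ω * K < ∑ ω, p ω * X ω := by
    refine sum_lt_sum (fun ω _ ↦ ?_)
      ⟨ω, mem_univ ω, mul_lt_mul_of_pos_left (hX ω hω.ne') hω⟩
    by_cases h0 : p ω = 0
    · simp [h0]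
    · exact mul_le_mul_of_nonneg_left (hX ω h0).le (hp.1 ω)
  rw [← sum_mul, hp.2, one_mul] at this
  exact this.not_ge h

theorem sum_mul_abs_le_sqrt [Fintype Ω] {p : Ω → ℝ} (hp : p ∈ stdSimplex ℝ Ω) (X : Ω → ℝ) :
    ∑ ω, p ω * |X ω| ≤ √(∑ ω, p ω * X ω ^ 2) := by
  refine Real.le_sqrt_of_sq_le ?_
  simpa only [sq_abs] using Real.pow_arith_mean_le_arith_mean_pow_of_even univ p (fun ω ↦ |X ω|)
    (fun ω _ ↦ hp.1 ω) hp.2 even_two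

theorem sum_mul_card_inter [Fintype Ω] (p : Ω → ℝ) (W : Finset V) (S : Ω → Finset V) :
    ∑ ω, p ω * #(W ∩ S ω) = ∑ v ∈ W, ∑ ω with v ∈ S ω, p ω := by
  simp only [sum_filter]
  rw [sum_comm]
  refine sum_congr rfl fun ω _ ↦ ?_
  rw [← sum_filter, filter_mem_eq_inter, sum_const, nsmul_eq_mul, mul_comm]

theorem sum_mul_ite_sub_eq_zero [Fintype κ] {p : κ → ℝ} (hp : p ∈ stdSimplex ℝ κ) (j : κ) :
    ∑ l, p l * ((if l = j then 1 else 0) - p j) = 0 := by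
  simp [mul_sub, ← sum_mul, hp.2]

theorem sum_ite_sub_sq_le_two [Fintype κ] {p : κ → ℝ} (hp : p ∈ stdSimplex ℝ κ) (l : κ) :
    ∑ j, ((if l = j then 1 else 0) - p j) ^ 2 ≤ 2 := by
  calc ∑ j, ((if l = j then 1 else 0) - p j) ^ 2 ≤ ∑ j, ((if l = j then 1 else 0) + p j) := by
        refine sum_le_sum fun j _ ↦ ?_
        have := hp.1 j
        have := hp.2 ▸ single_le_sum (fun i _ ↦ hp.1 i) (mem_univ j)
        split_ifs <;> nlinarith
    _ = 2 := by rw [sum_add_distrib, hp.2, sum_ite_eq, if_pos (mem_univ l)]; norm_num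

-- A random label with law `p` makes the cross terms vanish on average.
theorem exists_sum_mul_ite_sub_le_zero [Fintype V] [Fintype κ] {p : κ → ℝ}
    (hp : p ∈ stdSimplex ℝ κ) (D : V → κ → ℝ) (a : V → ℝ) :
    ∃ l, ∑ v, ∑ j, D v j * (((if l = j then 1 else 0) - p j) * a v) ≤ 0 := by
  let r : κ → κ → ℝ := fun l j ↦ (if l = j then 1 else 0) - p j
  suffices h : ∑ l, p l * ∑ v, ∑ j, D v j * (r l j * a v) ≤ 0 by
    obtain ⟨l, -, hl⟩ := exists_le_of_sum_mul_le hp h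
    exact ⟨l, hl⟩
  calc ∑ l, p l * ∑ v, ∑ j, D v j * (r l j * a v)
      = ∑ v, ∑ j, (∑ l, p l * r l j) * (D v j * a v) := by
        simp only [mul_sum, sum_mul]
        rw [sum_comm]
        refine sum_congr rfl fun v _ ↦ ?_
        rw [sum_comm]
        exact sum_congr rfl fun j _ ↦ sum_congr rfl fun l _ ↦ by ring
    _ = 0 := by simp only [r, sum_mul_ite_sub_eq_zero hp, zero_mul, sum_const_zero]
    _ ≤ 0 := le_rfl

theorem exists_balanced_labelling [Fintype V] [Fintype κ] {p : κ → ℝ} (hp : p ∈ stdSimplex ℝ κ)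
    (a : ι → V → ℝ) (S : Finset ι) :
    ∃ τ : ι → κ, ∑ v, ∑ j, (∑ i ∈ S with τ i = j, a i v - p j * ∑ i ∈ S, a i v) ^ 2 ≤
      2 * ∑ i ∈ S, ∑ v, a i v ^ 2 := by
  induction S using Finset.induction_on with
  | empty =>
    obtain ⟨j, -⟩ := exists_pos_of_mem_stdSimplex hp
    exact ⟨fun _ ↦ j, by simp⟩
  | insert i S hi ih =>
    obtain ⟨τ, hτ⟩ := ih
    set D : V → κ → ℝ := fun v j ↦ ∑ i ∈ S with τ i = j, a i v - p j * ∑ i ∈ S, a i v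
    obtain ⟨l, hl⟩ := exists_sum_mul_ite_sub_le_zero hp D (a i)
    set r : κ → ℝ := fun j ↦ (if l = j then 1 else 0) - p j
    refine ⟨Function.update τ i l, ?_⟩
    have hD (v : V) (j : κ) : ∑ i' ∈ insert i S with Function.update τ i l i' = j, a i' v -
        p j * ∑ i' ∈ insert i S, a i' v = D v j + r j * a i v := by
      have hτ' : ∀ i' ∈ S, (Function.update τ i l i' = j ↔ τ i' = j) := fun i' hi' ↦ by
        rw [Function.update_of_ne (ne_of_mem_of_not_mem hi' hi)]
      rw [sum_filter, sum_insert hi, ← sum_filter, filter_congr hτ', sum_insert hi,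
        Function.update_self]
      simp only [D, r]
      split_ifs <;> ring
    calc _ = ∑ v, ∑ j, D v j ^ 2 + 2 * ∑ v, ∑ j, D v j * (r j * a i v) +
            ∑ v, (∑ j, r j ^ 2) * a i v ^ 2 := by
          simp_rw [hD, add_sq, sum_add_distrib, mul_pow, sum_mul, mul_sum, mul_assoc]
      _ ≤ 2 * ∑ i ∈ S, ∑ v, a i v ^ 2 + 2 * 0 + ∑ v, 2 * a i v ^ 2 := by
          gcongr
          exact sum_ite_sub_sq_le_two hp l
      _ = 2 * ∑ i ∈ insert i S, ∑ v, a i v ^ 2 := by rw [sum_insert hi, ← mul_sum]; ring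

theorem sum_offDiag_add_le_sum_offDiag_insert {g : V × V → ℝ} (hg : 0 ≤ g) {f : Finset V} {u : V}
    (hu : u ∉ f) :
    ∑ q ∈ f.offDiag, g q + ∑ v ∈ f, g (u, v) ≤ ∑ q ∈ (insert u f).offDiag, g q := by
  calc ∑ q ∈ f.offDiag, g q + ∑ v ∈ f, g (u, v)
      = ∑ q ∈ f.offDiag, g q + ∑ q ∈ {u} ×ˢ f, g q := by rw [sum_product, sum_singleton]
    _ = ∑ q ∈ f.offDiag ∪ {u} ×ˢ f, g q := by
        refine (sum_union (disjoint_left.2 fun q hq hq' ↦ hu ?_)).symm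
        rw [← mem_singleton.1 (mem_product.1 hq').1]
        exact (mem_offDiag.1 hq).1
    _ ≤ ∑ q ∈ (insert u f).offDiag, g q := by
        rw [offDiag_insert hu]
        exact sum_le_sum_of_subset_of_nonneg subset_union_left fun q _ _ ↦ hg q

theorem abs_prod_sub_prod_le {S : Finset ι} {x y : ι → ℝ} (hx : ∀ i ∈ S, x i ∈ Set.Icc 0 1)
    (hy : ∀ i ∈ S, y i ∈ Set.Icc 0 1) :
    |∏ i ∈ S, x i - ∏ i ∈ S, y i| ≤ ∑ i ∈ S, |x i - y i| := by
  induction S using Finset.induction_on with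
  | empty => simp
  | insert i S hi ih =>
    simp only [prod_insert hi, sum_insert hi, forall_mem_insert] at *
    have hy0 : 0 ≤ ∏ k ∈ S, y k := prod_nonneg fun k hk ↦ (hy.2 k hk).1
    have hy1 : ∏ k ∈ S, y k ≤ 1 := prod_le_one (fun k hk ↦ (hy.2 k hk).1) fun k hk ↦ (hy.2 k hk).2
    calc |x i * ∏ k ∈ S, x k - y i * ∏ k ∈ S, y k|
        = |(x i - y i) * ∏ k ∈ S, y k + x i * (∏ k ∈ S, x k - ∏ k ∈ S, y k)| := by ring_nf
      _ ≤ |x i - y i| * ∏ k ∈ S, y k + x i * |∏ k ∈ S, x k - ∏ k ∈ S, y k| := by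
          refine (abs_add_le _ _).trans_eq ?_
          rw [abs_mul, abs_mul, abs_of_nonneg hy0, abs_of_nonneg hx.1.1]
      _ ≤ |x i - y i| * 1 + 1 * ∑ k ∈ S, |x k - y k| := by
          gcongr
          · exact hx.1.2
          · exact ih hx.2 hy.2
      _ = |x i - y i| + ∑ k ∈ S, |x k - y k| := by ring

theorem one_sub_prod_le_sum {S : Finset ι} {x : ι → ℝ} (hx : ∀ i ∈ S, x i ∈ Set.Icc 0 1) :
    1 - ∏ i ∈ S, x i ≤ ∑ i ∈ S, (1 - x i) := by
  have h := abs_prod_sub_prod_le (x := fun _ ↦ 1) (fun _ _ ↦ ⟨zero_le_one, le_rfl⟩) hx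
  rw [prod_const_one] at h
  refine (le_abs_self _).trans (h.trans_eq (sum_congr rfl fun i hi ↦ ?_))
  exact abs_of_nonneg (sub_nonneg.2 (hx i hi).2)

theorem exp_neg_div_one_sub_le_one_sub {x α : ℝ} (hx : 0 ≤ x) (hxα : x ≤ α) (hα : α < 1) :
    Real.exp (-(x / (1 - α))) ≤ 1 - x := by
  have h1 : 0 < 1 - x := by linarith
  have h2 : (1 - x)⁻¹ ≤ Real.exp (x / (1 - α)) := calc
    (1 - x)⁻¹ = x / (1 - x) + 1 := by field_simp; ring
    _ ≤ x / (1 - α) + 1 := by gcongr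
    _ ≤ Real.exp (x / (1 - α)) := Real.add_one_le_exp _
  rw [Real.exp_neg]
  exact inv_le_of_inv_le₀ h1 h2

theorem exp_neg_le_prod_one_sub [Fintype ι] {x : ι → ℝ} {α l : ℝ} (hx : ∀ i, 0 ≤ x i)
    (hxα : ∀ i, x i ≤ α) (hα : α < 1) (h : ∑ i, x i ≤ (1 - α) * l) :
    Real.exp (-l) ≤ ∏ i, (1 - x i) := by
  calc Real.exp (-l) ≤ Real.exp (∑ i, -(x i / (1 - α))) := by
        rw [Real.exp_le_exp, sum_neg_distrib, neg_le_neg_iff, ← sum_div]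
        exact (div_le_iff₀' (sub_pos.2 hα)).2 h
    _ = ∏ i, Real.exp (-(x i / (1 - α))) := Real.exp_sum _ _
    _ ≤ ∏ i, (1 - x i) := prod_le_prod (fun i _ ↦ (Real.exp_pos _).le) fun i _ ↦
        exp_neg_div_one_sub_le_one_sub (hx i) (hxα i) hα

theorem prod_one_sub_sub_exp_neg_le [Fintype ι] {x : ι → ℝ} (hx : ∀ i, x i ∈ Set.Icc 0 1) {l : ℝ}
    (h : ∑ i, x i ≤ l) : ∏ i, (1 - x i) - Real.exp (-l) ≤ l - ∑ i, x i := by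
  set s := ∑ i, x i
  have hs : Real.exp (-s) ≤ 1 :=
    Real.exp_le_one_iff.2 (neg_nonpos.2 (sum_nonneg fun i _ ↦ (hx i).1))
  have hprod : ∏ i, (1 - x i) ≤ Real.exp (-s) := calc
    ∏ i, (1 - x i) ≤ ∏ i, Real.exp (-x i) :=
      prod_le_prod (fun i _ ↦ sub_nonneg.2 (hx i).2) fun i _ ↦ Real.one_sub_le_exp_neg _
    _ = Real.exp (-s) := by rw [← Real.exp_sum, sum_neg_distrib]
  calc ∏ i, (1 - x i) - Real.exp (-l) ≤ Real.exp (-s) - Real.exp (-l) := by gcongr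
    _ = Real.exp (-s) * (1 - Real.exp (-(l - s))) := by rw [mul_sub, ← Real.exp_add]; ring_nf
    _ ≤ Real.exp (-s) * (l - s) := mul_le_mul_of_nonneg_left
        (by linarith [Real.one_sub_le_exp_neg (l - s)]) (Real.exp_pos _).le
    _ ≤ l - s := mul_le_of_le_one_left (sub_nonneg.2 h) hs

theorem abs_sub_inv_pow_succ_pow_le {x y b ε : ℝ} {j n : ℕ} (hb : 1 ≤ b)
    (hx : |x - b⁻¹ ^ n * y| ≤ ε) (hy : |y - (b ^ j)⁻¹ ^ n| ≤ j * ε) :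
    |x - (b ^ (j + 1))⁻¹ ^ n| ≤ (j + 1 : ℕ) * ε := by
  have hb0 : 0 ≤ b⁻¹ := inv_nonneg.2 (zero_le_one.trans hb)
  have hy' : |b⁻¹ ^ n * (y - (b ^ j)⁻¹ ^ n)| ≤ j * ε := by
    rw [abs_mul, abs_of_nonneg (pow_nonneg hb0 n)]
    exact (mul_le_of_le_one_left (abs_nonneg _)
      (pow_le_one₀ hb0 (inv_le_one_of_one_le₀ hb))).trans hy
  calc |x - (b ^ (j + 1))⁻¹ ^ n|
      = |(x - b⁻¹ ^ n * y) + b⁻¹ ^ n * (y - (b ^ j)⁻¹ ^ n)| := by ring_nf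
    _ ≤ ε + j * ε := (abs_add_le _ _).trans (add_le_add hx hy')
    _ = (j + 1 : ℕ) * ε := by push_cast; ring

end General

section Weights

variable {V : Type*} [Fintype V]

/-- The total weight of the sets containing `v`: when `c` is the law of a random set, the
probability that this set contains `v`. -/
noncomputable def vertexWeight (c : Finset V → ℝ) (v : V) : ℝ := ∑ e with v ∈ e, c e

/-- The total weight of the sets containing both `v` and `v'`: when `c` is the law of a random set,
the probability that this set contains both. -/
noncomputable def pairWeight (c : Finset V → ℝ) (v v' : V) : ℝ := ∑ e with v ∈ e ∧ v' ∈ e, c e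

/-- The total weight of the sets disjoint from `f`: when `c` is the law of a random set, the
probability that this set avoids `f`. -/
noncomputable def avoidWeight (c : Finset V → ℝ) (f : Finset V) : ℝ := ∑ e with Disjoint f e, c e

/-- The completion of a subprobability to a probability: the missing mass goes to the empty set,
which changes no vertex weight. -/
noncomputable def fill (c : Finset V → ℝ) : Finset V → ℝ := c + Pi.single ∅ (1 - ∑ e, c e)

variable {c d : Finset V → ℝ}

theorem vertexWeight_nonneg (hc : 0 ≤ c) (v : V) : 0 ≤ vertexWeight c v :=
  sum_nonneg fun e _ ↦ hc e

theorem pairWeight_nonneg (hc : 0 ≤ c) (v v' : V) : 0 ≤ pairWeight c v v' :=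
  sum_nonneg fun e _ ↦ hc e

theorem vertexWeight_mono (h : c ≤ d) (v : V) : vertexWeight c v ≤ vertexWeight d v :=
  sum_le_sum fun e _ ↦ h e

theorem pairWeight_mono (h : c ≤ d) (v v' : V) : pairWeight c v v' ≤ pairWeight d v v' :=
  sum_le_sum fun e _ ↦ h e

theorem vertexWeight_le_sum (hc : 0 ≤ c) (v : V) : vertexWeight c v ≤ ∑ e, c e :=
  sum_le_sum_of_subset_of_nonneg (filter_subset _ _) fun e _ _ ↦ hc e

theorem vertexWeight_smul (B : ℝ) (c : Finset V → ℝ) (v : V) :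
    vertexWeight (B • c) v = B * vertexWeight c v := by
  simp [vertexWeight, mul_sum]

theorem pairWeight_smul (B : ℝ) (c : Finset V → ℝ) (v v' : V) :
    pairWeight (B • c) v v' = B * pairWeight c v v' := by
  simp [pairWeight, mul_sum]

theorem sum_vertexWeight_mul (c : Finset V → ℝ) (g : V → ℝ) :
    ∑ v, vertexWeight c v * g v = ∑ e, c e * ∑ v ∈ e, g v := by
  simp only [vertexWeight, sum_mul, mul_sum, sum_filter]
  rw [sum_comm]
  simp

theorem sum_vertexWeight (c : Finset V → ℝ) : ∑ v, vertexWeight c v = ∑ e, #e * c e := by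
  simpa [mul_comm] using sum_vertexWeight_mul c 1

theorem avoidWeight_singleton (c : Finset V → ℝ) (v : V) :
    avoidWeight c {v} = ∑ e, c e - vertexWeight c v := by
  simp only [avoidWeight, disjoint_singleton_left]
  rw [eq_sub_iff_add_eq', vertexWeight, sum_filter_add_sum_filter_not]

theorem avoidWeight_mem_Icc (hc : c ∈ stdSimplex ℝ (Finset V)) (f : Finset V) :
    avoidWeight c f ∈ Set.Icc 0 1 :=
  ⟨sum_nonneg fun e _ ↦ hc.1 e,
    hc.2 ▸ sum_le_sum_of_subset_of_nonneg (filter_subset _ _) fun e _ _ ↦ hc.1 e⟩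

theorem one_sub_vertexWeight_mem_Icc (hc : c ∈ stdSimplex ℝ (Finset V)) (v : V) :
    1 - vertexWeight c v ∈ Set.Icc 0 1 := by
  have := avoidWeight_mem_Icc hc {v}
  rwa [avoidWeight_singleton, hc.2] at this

theorem vertexWeight_fill (c : Finset V → ℝ) (v : V) :
    vertexWeight (fill c) v = vertexWeight c v :=
  sum_congr rfl fun e he ↦ by
    simp [fill, (ne_empty_of_mem (mem_filter.1 he).2)]

theorem pairWeight_fill (c : Finset V → ℝ) (v v' : V) :
    pairWeight (fill c) v v' = pairWeight c v v' :=
  sum_congr rfl fun e he ↦ by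
    simp [fill, (ne_empty_of_mem (mem_filter.1 he).2.1)]

theorem fill_mem_stdSimplex (hc : 0 ≤ c) (h : ∑ e, c e ≤ 1) : fill c ∈ stdSimplex ℝ (Finset V) :=
  ⟨add_nonneg hc (Pi.single_nonneg.2 (sub_nonneg.2 h)), by simp [fill, sum_add_distrib]⟩

theorem eq_empty_or_ne_zero_of_fill_ne_zero {e : Finset V} (h : fill c e ≠ 0) :
    e = ∅ ∨ c e ≠ 0 := by
  by_contra! he
  simp [fill, he.1.ne_empty, he.2] at h

theorem avoidWeight_insert (c : Finset V → ℝ) (f : Finset V) (v : V) :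
    avoidWeight c (insert v f) =
      avoidWeight c f - vertexWeight c v + ∑ e with v ∈ e ∧ ¬ Disjoint f e, c e := by
  simp only [avoidWeight, vertexWeight, sum_filter]
  rw [← sum_sub_distrib, ← sum_add_distrib]
  refine sum_congr rfl fun e _ ↦ ?_
  by_cases h1 : v ∈ e <;> by_cases h2 : Disjoint f e <;> simp [disjoint_insert_left, h1, h2]

theorem sum_filter_not_disjoint_le (hc : 0 ≤ c) (f : Finset V) (v : V) :
    ∑ e with v ∈ e ∧ ¬ Disjoint f e, c e ≤ ∑ v' ∈ f, pairWeight c v v' := by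
  simp only [pairWeight, sum_filter]
  rw [sum_comm]
  refine sum_le_sum fun e _ ↦ ?_
  split_ifs with h
  · obtain ⟨v', hv', hv'e⟩ := not_disjoint_iff.1 h.2
    refine (if_pos ⟨h.1, hv'e⟩).symm.trans_le (single_le_sum (f := fun v' ↦ ite _ _ _) ?_ hv')
    exact fun _ _ ↦ ite_nonneg (hc e) le_rfl
  · exact sum_nonneg fun _ _ ↦ ite_nonneg (hc e) le_rfl

theorem abs_avoidWeight_sub_prod_le (hc : c ∈ stdSimplex ℝ (Finset V)) (f : Finset V) :
    |avoidWeight c f - ∏ v ∈ f, (1 - vertexWeight c v)| ≤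
      ∑ q ∈ f.offDiag, (pairWeight c q.1 q.2 + vertexWeight c q.1 * vertexWeight c q.2) := by
  have hv0 := vertexWeight_nonneg hc.1
  induction f using Finset.induction_on with
  | empty => simp [avoidWeight, hc.2]
  | insert u f hu ih =>
    set Q := ∑ e with u ∈ e ∧ ¬ Disjoint f e, c e
    set P := ∏ v ∈ f, (1 - vertexWeight c v)
    have hP : 1 - P ≤ ∑ v ∈ f, vertexWeight c v := by
      simpa using one_sub_prod_le_sum fun v (_ : v ∈ f) ↦ one_sub_vertexWeight_mem_Icc hc v
    have hP1 : P ≤ 1 := prod_le_one (fun v _ ↦ (one_sub_vertexWeight_mem_Icc hc v).1)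
      fun v _ ↦ (one_sub_vertexWeight_mem_Icc hc v).2
    have hstep : |Q - vertexWeight c u * (1 - P)| ≤
        ∑ v ∈ f, (pairWeight c u v + vertexWeight c u * vertexWeight c v) := by
      rw [sum_add_distrib, ← mul_sum]
      have hQ := sum_filter_not_disjoint_le hc.1 f u
      have hQ0 : 0 ≤ Q := sum_nonneg fun e _ ↦ hc.1 e
      have h0 := mul_nonneg (hv0 u) (sub_nonneg.2 hP1)
      have h1 := mul_le_mul_of_nonneg_left hP (hv0 u)
      exact abs_sub_le_iff.2 ⟨by linarith, by linarith⟩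
    calc |avoidWeight c (insert u f) - ∏ v ∈ insert u f, (1 - vertexWeight c v)|
        = |(avoidWeight c f - P) + (Q - vertexWeight c u * (1 - P))| := by
          rw [avoidWeight_insert, prod_insert hu]
          simp only [P, Q]
          ring_nf
      _ ≤ _ := (abs_add_le _ _).trans (add_le_add ih hstep)
      _ ≤ _ := sum_offDiag_add_le_sum_offDiag_insert (g := fun q ↦
          pairWeight c q.1 q.2 + vertexWeight c q.1 * vertexWeight c q.2) (fun q ↦
          add_nonneg (pairWeight_nonneg hc.1 _ _) (mul_nonneg (hv0 _) (hv0 _))) hu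

theorem abs_prod_avoidWeight_sub_le {ι : Type*} [Fintype ι] {a : ι → Finset V → ℝ}
    (ha : ∀ i, a i ∈ stdSimplex ℝ (Finset V)) {K : ℝ}
    (hK : ∀ v v', v ≠ v' →
      ∑ i, (pairWeight (a i) v v' + vertexWeight (a i) v * vertexWeight (a i) v') ≤ K)
    (f : Finset V) :
    |∏ i, avoidWeight (a i) f - ∏ v ∈ f, ∏ i, (1 - vertexWeight (a i) v)| ≤ #f.offDiag * K := by
  have hprod (i : ι) : ∏ v ∈ f, (1 - vertexWeight (a i) v) ∈ Set.Icc 0 1 :=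
    ⟨prod_nonneg fun v _ ↦ (one_sub_vertexWeight_mem_Icc (ha i) v).1,
      prod_le_one (fun v _ ↦ (one_sub_vertexWeight_mem_Icc (ha i) v).1)
        fun v _ ↦ (one_sub_vertexWeight_mem_Icc (ha i) v).2⟩
  rw [prod_comm]
  calc _ ≤ ∑ i, |avoidWeight (a i) f - ∏ v ∈ f, (1 - vertexWeight (a i) v)| :=
        abs_prod_sub_prod_le (fun i _ ↦ avoidWeight_mem_Icc (ha i) f) fun i _ ↦ hprod i
    _ ≤ ∑ i, ∑ q ∈ f.offDiag,
          (pairWeight (a i) q.1 q.2 + vertexWeight (a i) q.1 * vertexWeight (a i) q.2) :=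
        sum_le_sum fun i _ ↦ abs_avoidWeight_sub_prod_le (ha i) f
    _ = ∑ q ∈ f.offDiag, ∑ i,
          (pairWeight (a i) q.1 q.2 + vertexWeight (a i) q.1 * vertexWeight (a i) q.2) := sum_comm
    _ ≤ #f.offDiag • K := sum_le_card_nsmul _ _ _ fun q hq ↦ hK _ _ (mem_offDiag.1 hq).2.2
    _ = #f.offDiag * K := nsmul_eq_mul _ _

theorem sum_prod_filter_forall_mem {κ β : Type*} [Fintype κ] [DecidableEq κ] [Fintype β]
    (c : κ → β → ℝ) (t : κ → Finset β) :
    ∑ x : κ → β with ∀ k, x k ∈ t k, ∏ k, c k (x k) = ∏ k, ∑ e ∈ t k, c k e := by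
  rw [prod_univ_sum]
  exact sum_congr (by ext; simp) fun _ _ ↦ rfl

theorem prod_apply_mem_stdSimplex {κ β : Type*} [Fintype κ] [DecidableEq κ] [Fintype β]
    {c : κ → β → ℝ} (hc : ∀ k, c k ∈ stdSimplex ℝ β) :
    (fun x ↦ ∏ k, c k (x k)) ∈ stdSimplex ℝ (κ → β) :=
  ⟨fun x ↦ prod_nonneg fun k _ ↦ (hc k).1 (x k), by
    simpa [(hc _).2] using sum_prod_filter_forall_mem c fun _ ↦ univ⟩

end Weights

section Thinning

/-- The factor by which to multiply `x` in order to obtain `min x L`. -/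
noncomputable def capFactor (L x : ℝ) : ℝ := L / max L x

theorem capFactor_mem_Icc {L : ℝ} (hL : 0 ≤ L) (x : ℝ) : capFactor L x ∈ Set.Icc 0 1 :=
  ⟨by unfold capFactor; positivity, div_le_one_of_le₀ (le_max_left _ _) (by positivity)⟩

theorem mul_capFactor_le {L : ℝ} (hL : 0 ≤ L) (x : ℝ) : x * capFactor L x ≤ L := by
  rw [capFactor, mul_div_left_comm]
  exact mul_le_of_le_one_right hL (div_le_one_of_le₀ (le_max_right _ _) (by positivity))

theorem mul_one_sub_capFactor {L : ℝ} (hL : 0 < L) (x : ℝ) :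
    x * (1 - capFactor L x) = (x - L)⁺ := by
  rcases le_total x L with h | h
  · rw [capFactor, max_eq_left h, div_self hL.ne', sub_self, mul_zero,
      posPart_eq_zero.2 (sub_nonpos.2 h)]
  · rw [capFactor, max_eq_right h, posPart_eq_self.2 (sub_nonneg.2 h)]
    field_simp [(hL.trans_le h).ne']

theorem prod_capFactor_mem_Icc {α : Type*} {L : ℝ} (hL : 0 ≤ L) (s : Finset α) (g : α → ℝ) :
    ∏ v ∈ s, capFactor L (g v) ∈ Set.Icc 0 1 :=
  ⟨prod_nonneg fun _ _ ↦ (capFactor_mem_Icc hL _).1,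
    prod_le_one (fun _ _ ↦ (capFactor_mem_Icc hL _).1) fun _ _ ↦ (capFactor_mem_Icc hL _).2⟩

variable {V ι : Type*} [Fintype V] [Fintype ι]

/-- The weights `w`, reduced so that each `w i` has total weight at most `1` and each vertex has
weight at most `L` altogether. -/
noncomputable def thinned (w : ι → Finset V → ℝ) (L : ℝ) (i : ι) (e : Finset V) : ℝ :=
  w i e * (capFactor 1 (∑ e', w i e') * ∏ v ∈ e, capFactor L (∑ i', vertexWeight (w i') v))

/-- The amount by which `w` violates the constraints that `thinned` enforces. -/
noncomputable def excess (w : ι → Finset V → ℝ) (L : ℝ) : ℝ :=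
  ∑ i, (∑ e, w i e - 1)⁺ + ∑ v, (∑ i, vertexWeight (w i) v - L)⁺

variable {w : ι → Finset V → ℝ} {L : ℝ}

theorem thinned_nonneg (hw : ∀ i, 0 ≤ w i) (hL : 0 ≤ L) (i : ι) : 0 ≤ thinned w L i := fun e ↦
  mul_nonneg (hw i e) (mul_nonneg (capFactor_mem_Icc zero_le_one _).1
    (prod_capFactor_mem_Icc hL _ _).1)

theorem thinned_le (hw : ∀ i, 0 ≤ w i) (hL : 0 ≤ L) (i : ι) : thinned w L i ≤ w i := fun e ↦
  mul_le_of_le_one_right (hw i e) (mul_le_one₀ (capFactor_mem_Icc zero_le_one _).2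
    (prod_capFactor_mem_Icc hL _ _).1 (prod_capFactor_mem_Icc hL _ _).2)

theorem sum_thinned_le_one (hw : ∀ i, 0 ≤ w i) (hL : 0 ≤ L) (i : ι) :
    ∑ e, thinned w L i e ≤ 1 := by
  calc ∑ e, thinned w L i e ≤ ∑ e, w i e * capFactor 1 (∑ e', w i e') :=
        sum_le_sum fun e _ ↦ mul_le_mul_of_nonneg_left (mul_le_of_le_one_right
          (capFactor_mem_Icc zero_le_one _).1 (prod_capFactor_mem_Icc hL _ _).2) (hw i e)
    _ ≤ 1 := by rw [← sum_mul]; exact mul_capFactor_le zero_le_one _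

theorem sum_vertexWeight_thinned_le (hw : ∀ i, 0 ≤ w i) (hL : 0 ≤ L) (v : V) :
    ∑ i, vertexWeight (thinned w L i) v ≤ L := by
  set h : V → ℝ := fun v ↦ capFactor L (∑ i, vertexWeight (w i) v)
  have hprod {e : Finset V} (hv : v ∈ e) : ∏ u ∈ e, h u ≤ h v := by
    rw [← mul_prod_erase e h hv]
    exact mul_le_of_le_one_right (capFactor_mem_Icc hL _).1 (prod_capFactor_mem_Icc hL _ _).2
  calc ∑ i, vertexWeight (thinned w L i) v ≤ ∑ i, vertexWeight (w i) v * h v := by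
        refine sum_le_sum fun i _ ↦ ?_
        rw [vertexWeight, vertexWeight, sum_mul]
        refine sum_le_sum fun e he ↦ mul_le_mul_of_nonneg_left ?_ (hw i e)
        exact (mul_le_of_le_one_left (prod_capFactor_mem_Icc hL _ _).1
          (capFactor_mem_Icc zero_le_one _).2).trans (hprod (mem_filter.1 he).2)
    _ ≤ L := by rw [← sum_mul]; exact mul_capFactor_le hL _

theorem sub_thinned_le (hw : ∀ i, 0 ≤ w i) (hL : 0 ≤ L) (i : ι) (e : Finset V) :
    w i e - thinned w L i e ≤ w i e * ((1 - capFactor 1 (∑ e', w i e')) +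
      ∑ v ∈ e, (1 - capFactor L (∑ i', vertexWeight (w i') v))) := by
  set g := capFactor 1 (∑ e', w i e')
  set h : V → ℝ := fun v ↦ capFactor L (∑ i', vertexWeight (w i') v)
  have hg : g ∈ Set.Icc 0 1 := capFactor_mem_Icc zero_le_one _
  have hP : ∏ v ∈ e, h v ∈ Set.Icc 0 1 := prod_capFactor_mem_Icc hL _ _
  have hsum : 1 - ∏ v ∈ e, h v ≤ ∑ v ∈ e, (1 - h v) :=
    one_sub_prod_le_sum fun v _ ↦ capFactor_mem_Icc hL _
  calc w i e - thinned w L i e = w i e * ((1 - g) + g * (1 - ∏ v ∈ e, h v)) := by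
        rw [thinned]; ring
    _ ≤ w i e * ((1 - g) + ∑ v ∈ e, (1 - h v)) := by
        gcongr
        · exact hw i e
        · exact (mul_le_of_le_one_left (sub_nonneg.2 hP.2) hg.2).trans hsum

theorem sum_vertexWeight_sub_thinned_le (hw : ∀ i, 0 ≤ w i) (hL : 0 < L) {R : ℕ}
    (hR : ∀ i e, w i e ≠ 0 → #e ≤ R) :
    ∑ v, (∑ i, vertexWeight (w i) v - ∑ i, vertexWeight (thinned w L i) v) ≤
      R * excess w L := by
  set g : ι → ℝ := fun i ↦ 1 - capFactor 1 (∑ e, w i e)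
  set h : V → ℝ := fun v ↦ 1 - capFactor L (∑ i, vertexWeight (w i) v)
  calc ∑ v, (∑ i, vertexWeight (w i) v - ∑ i, vertexWeight (thinned w L i) v)
      = ∑ i, ∑ e, #e * (w i e - thinned w L i e) := by
        simp only [← sum_sub_distrib, mul_sub]
        rw [sum_comm]
        simp only [sum_sub_distrib, sum_vertexWeight]
    _ ≤ ∑ i, ∑ e, R * (w i e * (g i + ∑ v ∈ e, h v)) := by
        refine sum_le_sum fun i _ ↦ sum_le_sum fun e _ ↦ ?_
        by_cases hwe : w i e = 0
        · simp [hwe, thinned]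
        · exact mul_le_mul (by exact_mod_cast hR i e hwe) (sub_thinned_le hw hL.le i e)
            (sub_nonneg.2 (thinned_le hw hL.le i e)) (Nat.cast_nonneg R)
    _ = R * (∑ i, (∑ e, w i e) * g i + ∑ v, (∑ i, vertexWeight (w i) v) * h v) := by
        simp only [mul_add, sum_add_distrib, ← mul_sum, sum_mul, ← sum_vertexWeight_mul]
        rw [sum_comm (s := univ (α := V))]
    _ = R * excess w L := by
        simp only [g, h, excess, mul_one_sub_capFactor one_pos, mul_one_sub_capFactor hL]

end Thinning

section Round

variable {V ι : Type*} [Fintype V] [Fintype ι]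

/-- The family `a` together with an independent random deletion of each vertex `v`, encoded as a
random set that is `{v}` or empty. The probabilities are such that a vertex avoids all the sets
with probability exactly `β`. -/
noncomputable def equalized (a : ι → Finset V → ℝ) (β : ℝ) : ι ⊕ V → Finset V → ℝ :=
  Sum.elim a fun v ↦ Pi.single {v} (1 - β / ∏ i, (1 - vertexWeight (a i) v))

/-- The joint law of independent random sets, one for each member of `equalized a β`. -/
noncomputable def roundLaw (a : ι → Finset V → ℝ) (β : ℝ) (x : ι ⊕ V → Finset V) : ℝ :=
  ∏ k, fill (equalized a β k) (x k)

/-- The vertices deleted in a round without being covered by any of the chosen sets. -/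
noncomputable def wasted (x : ι ⊕ V → Finset V) : Finset V :=
  {v | (∀ i, v ∉ x (.inl i)) ∧ ∃ u, v ∈ x (.inr u)}

theorem vertexWeight_single (u v : V) (r : ℝ) :
    vertexWeight (Pi.single {u} r) v = if v = u then r else 0 := by
  simp [vertexWeight, sum_pi_single']

theorem pairWeight_single {u v v' : V} (h : v ≠ v') (r : ℝ) :
    pairWeight (Pi.single {u} r) v v' = 0 := by
  rw [pairWeight, sum_pi_single', if_neg]
  simp only [mem_filter, mem_univ, mem_singleton, true_and, not_and]
  exact fun hv hv' ↦ h (hv.trans hv'.symm)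

variable {a : ι → Finset V → ℝ} {β : ℝ}

theorem prod_one_sub_vertexWeight_equalized (v : V) (h : ∏ i, (1 - vertexWeight (a i) v) ≠ 0) :
    ∏ k, (1 - vertexWeight (equalized a β k) v) = β := by
  rw [Fintype.prod_sum_type]
  simp only [equalized, Sum.elim_inl, Sum.elim_inr, vertexWeight_single]
  rw [prod_eq_single v (by grind) (by simp), if_pos rfl, sub_sub_cancel, mul_div_cancel₀ _ h]

theorem sum_weights_equalized {v v' : V} (h : v ≠ v') :
    ∑ k, (pairWeight (equalized a β k) v v' +
        vertexWeight (equalized a β k) v * vertexWeight (equalized a β k) v') =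
      ∑ i, (pairWeight (a i) v v' + vertexWeight (a i) v * vertexWeight (a i) v') := by
  rw [Fintype.sum_sum_type]
  simp only [equalized, Sum.elim_inl, Sum.elim_inr, vertexWeight_single, pairWeight_single h]
  rw [add_eq_left]
  exact sum_eq_zero fun u _ ↦ by grind

theorem fill_equalized_mem_stdSimplex (ha : ∀ i, 0 ≤ a i) (ha1 : ∀ i, ∑ e, a i e ≤ 1) (hβ : 0 < β)
    (hβa : ∀ v, β ≤ ∏ i, (1 - vertexWeight (a i) v)) (k : ι ⊕ V) :
    fill (equalized a β k) ∈ stdSimplex ℝ (Finset V) := by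
  rcases k with i | v
  · exact fill_mem_stdSimplex (ha i) (ha1 i)
  · have hpos := hβ.trans_le (hβa v)
    refine fill_mem_stdSimplex (Pi.single_nonneg.2 ?_) ?_
    · exact sub_nonneg.2 ((div_le_one hpos).2 (hβa v))
    · rw [equalized, Sum.elim_inr, Fintype.sum_pi_single']
      exact sub_le_self _ (div_pos hβ hpos).le

theorem roundLaw_mem_stdSimplex (ha : ∀ i, 0 ≤ a i) (ha1 : ∀ i, ∑ e, a i e ≤ 1) (hβ : 0 < β)
    (hβa : ∀ v, β ≤ ∏ i, (1 - vertexWeight (a i) v)) :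
    roundLaw a β ∈ stdSimplex ℝ (ι ⊕ V → Finset V) :=
  prod_apply_mem_stdSimplex (fill_equalized_mem_stdSimplex ha ha1 hβ hβa)

theorem eq_empty_or_ne_zero_of_roundLaw_ne_zero {x : ι ⊕ V → Finset V} (hx : roundLaw a β x ≠ 0)
    (i : ι) : x (.inl i) = ∅ ∨ a i (x (.inl i)) ≠ 0 := by
  rw [roundLaw, prod_ne_zero_iff] at hx
  exact eq_empty_or_ne_zero_of_fill_ne_zero (hx (.inl i) (mem_univ _))

theorem abs_sum_roundLaw_sub_le (ha : ∀ i, 0 ≤ a i) (ha1 : ∀ i, ∑ e, a i e ≤ 1) (hβ : 0 < β)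
    (hβa : ∀ v, β ≤ ∏ i, (1 - vertexWeight (a i) v)) {K : ℝ}
    (hK : ∀ v v', v ≠ v' →
      ∑ i, (pairWeight (a i) v v' + vertexWeight (a i) v * vertexWeight (a i) v') ≤ K)
    (f : Finset V) :
    |∑ x with ∀ k, Disjoint f (x k), roundLaw a β x - β ^ #f| ≤ #f.offDiag * K := by
  have havoid : ∑ x with ∀ k, Disjoint f (x k), roundLaw a β x =
      ∏ k, avoidWeight (fill (equalized a β k)) f := by
    have := sum_prod_filter_forall_mem (fun k ↦ fill (equalized a β k)) fun _ ↦ {e | Disjoint f e}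
    simp only [mem_filter_univ] at this
    exact this
  have hβf : β ^ #f = ∏ v ∈ f, ∏ k, (1 - vertexWeight (fill (equalized a β k)) v) := by
    simp only [vertexWeight_fill, prod_one_sub_vertexWeight_equalized _ (hβ.trans_le (hβa _)).ne',
      prod_const]
  rw [havoid, hβf]
  refine abs_prod_avoidWeight_sub_le (fill_equalized_mem_stdSimplex ha ha1 hβ hβa)
    (fun v v' h ↦ ?_) f
  simp only [vertexWeight_fill, pairWeight_fill]
  exact (sum_weights_equalized h).trans_le (hK v v' h)

theorem sum_roundLaw_wasted (ha : ∀ i, 0 ≤ a i) (ha1 : ∀ i, ∑ e, a i e ≤ 1) (hβ : 0 < β)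
    (hβa : ∀ v, β ≤ ∏ i, (1 - vertexWeight (a i) v)) (v : V) :
    ∑ x with v ∈ wasted x, roundLaw a β x = ∏ i, (1 - vertexWeight (a i) v) - β := by
  set c : ι ⊕ V → Finset V → ℝ := fun k ↦ fill (equalized a β k)
  have hc : ∀ k, c k ∈ stdSimplex ℝ (Finset V) := fill_equalized_mem_stdSimplex ha ha1 hβ hβa
  have hv (k : ι ⊕ V) : ∑ e with v ∉ e, c k e = 1 - vertexWeight (equalized a β k) v := by
    rw [← vertexWeight_fill, ← (hc k).2, ← avoidWeight_singleton]
    simp only [avoidWeight, disjoint_singleton_left, c]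
  have huncovered : ∑ x with ∀ i, v ∉ x (.inl i), roundLaw a β x =
      ∏ i, (1 - vertexWeight (a i) v) := by
    have := sum_prod_filter_forall_mem c (Sum.elim (fun _ ↦ univ.filter (v ∉ ·)) fun _ ↦ univ)
    simp only [Sum.forall, Sum.elim_inl, Sum.elim_inr, mem_filter_univ, mem_univ, implies_true,
      and_true, Fintype.prod_sum_type, hv, (hc _).2, prod_const_one, mul_one] at this
    simp only [roundLaw, Fintype.prod_sum_type]
    exact this
  have hsurvives : ∑ x with ∀ k, v ∉ x k, roundLaw a β x = β := by
    have := sum_prod_filter_forall_mem c fun _ ↦ {e | v ∉ e}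
    simp only [mem_filter_univ, hv, c] at this
    exact this.trans (prod_one_sub_vertexWeight_equalized v (hβ.trans_le (hβa v)).ne')
  have hsplit := sum_filter_add_sum_filter_not (univ.filter fun x : ι ⊕ V → Finset V ↦
    ∀ i, v ∉ x (.inl i)) (fun x ↦ ∃ u, v ∈ x (.inr u)) (roundLaw a β)
  rw [filter_filter, filter_filter] at hsplit
  rw [← huncovered, ← hsplit, eq_sub_iff_add_eq]
  nth_rw 2 [← hsurvives]
  simp [wasted, Sum.forall]

/-- An upper bound for the expected number of vertices of `W` wasted in a round with the weights
`w`, which are thinned to `L` and should give each vertex total weight `l`. -/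
noncomputable def roundCost (w : ι → Finset V → ℝ) (W : Finset V) (R : ℕ) (l L : ℝ) : ℝ :=
  ∑ v ∈ W, (l - ∑ i, vertexWeight (w i) v) + R * excess w L

theorem sum_roundLaw_mul_card_wasted_le {w : ι → Finset V → ℝ} (hw : ∀ i, 0 ≤ w i) {R : ℕ}
    (hR : ∀ i e, w i e ≠ 0 → #e ≤ R) {l L : ℝ} (hL : 0 < L) (hLl : L ≤ l)
    (hβ : ∀ v, Real.exp (-l) ≤ ∏ i, (1 - vertexWeight (thinned w L i) v)) (W : Finset V) :
    ∑ x, roundLaw (thinned w L) (Real.exp (-l)) x * #(W ∩ wasted x) ≤ roundCost w W R l L := by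
  set a := thinned w L
  have ha := thinned_nonneg hw hL.le
  have ha1 := sum_thinned_le_one hw hL.le
  have hmem (i : ι) (v : V) : vertexWeight (a i) v ∈ Set.Icc 0 1 :=
    ⟨vertexWeight_nonneg (ha i) v, (vertexWeight_le_sum (ha i) v).trans (ha1 i)⟩
  calc ∑ x, roundLaw a (Real.exp (-l)) x * #(W ∩ wasted x)
      = ∑ v ∈ W, (∏ i, (1 - vertexWeight (a i) v) - Real.exp (-l)) := by
        rw [sum_mul_card_inter]
        exact sum_congr rfl fun v _ ↦ sum_roundLaw_wasted ha ha1 (Real.exp_pos _) hβ v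
    _ ≤ ∑ v ∈ W, (l - ∑ i, vertexWeight (a i) v) :=
        sum_le_sum fun v _ ↦ prod_one_sub_sub_exp_neg_le (hmem · v)
          ((sum_vertexWeight_thinned_le hw hL.le v).trans hLl)
    _ = ∑ v ∈ W, (l - ∑ i, vertexWeight (w i) v) +
          ∑ v ∈ W, (∑ i, vertexWeight (w i) v - ∑ i, vertexWeight (a i) v) := by
        rw [← sum_add_distrib]; simp
    _ ≤ roundCost w W R l L := by
        refine add_le_add_right (le_trans ?_ (sum_vertexWeight_sub_thinned_le hw hL hR)) _
        refine sum_le_sum_of_subset_of_nonneg (subset_univ _) fun v _ _ ↦ sub_nonneg.2 ?_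
        exact sum_le_sum fun i _ ↦ vertexWeight_mono (thinned_le hw hL.le i) v

theorem exists_random_round {w : ι → Finset V → ℝ} (hw : ∀ i, 0 ≤ w i) {R : ℕ}
    (hR : ∀ i e, w i e ≠ 0 → #e ≤ R) {α : ℝ} (hα0 : 0 ≤ α) (hα1 : α < 1)
    (hα : ∀ i v, vertexWeight (w i) v ≤ α)
    (hpair : ∀ v v', v ≠ v' → ∑ i, pairWeight (w i) v v' ≤ α) {l : ℝ} (hl : 0 < l)
    (W : Finset V) :
    ∃ q ∈ stdSimplex ℝ (ι ⊕ V → Finset V),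
      (∀ x, q x ≠ 0 → ∀ i, x (.inl i) = ∅ ∨ w i (x (.inl i)) ≠ 0) ∧
      (∀ f : Finset V, |∑ x with ∀ k, Disjoint f (x k), q x - Real.exp (-l) ^ #f| ≤
        #f ^ 2 * (α + α * l)) ∧
      ∑ x, q x * #(W ∩ wasted x) ≤ roundCost w W R l ((1 - α) * l) := by
  set L := (1 - α) * l
  set a := thinned w L
  have hL : 0 < L := mul_pos (sub_pos.2 hα1) hl
  have hLl : L ≤ l := mul_le_of_le_one_left hl.le (sub_le_self _ hα0)
  have ha : ∀ i, 0 ≤ a i := thinned_nonneg hw hL.le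
  have ha1 : ∀ i, ∑ e, a i e ≤ 1 := sum_thinned_le_one hw hL.le
  have hav : ∀ v, ∑ i, vertexWeight (a i) v ≤ L := sum_vertexWeight_thinned_le hw hL.le
  have haα (i : ι) (v : V) : vertexWeight (a i) v ≤ α :=
    (vertexWeight_mono (thinned_le hw hL.le i) v).trans (hα i v)
  have ha0 (i : ι) (v : V) : 0 ≤ vertexWeight (a i) v := vertexWeight_nonneg (ha i) v
  have hβ (v : V) : Real.exp (-l) ≤ ∏ i, (1 - vertexWeight (a i) v) :=
    exp_neg_le_prod_one_sub (ha0 · v) (haα · v) hα1 (hav v)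
  refine ⟨roundLaw a (Real.exp (-l)), roundLaw_mem_stdSimplex ha ha1 (Real.exp_pos _) hβ,
    fun x hx i ↦ (eq_empty_or_ne_zero_of_roundLaw_ne_zero hx i).imp_right left_ne_zero_of_mul,
    fun f ↦ ?_, sum_roundLaw_mul_card_wasted_le hw hR hL hLl hβ W⟩
  · have hcard : (#f.offDiag : ℝ) ≤ #f ^ 2 := by
      rw [offDiag_card, sq]
      exact_mod_cast Nat.sub_le _ _
    refine (abs_sum_roundLaw_sub_le ha ha1 (Real.exp_pos _) hβ (fun v v' h ↦ ?_) f).trans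
      (mul_le_mul_of_nonneg_right hcard (by positivity))
    calc ∑ i, (pairWeight (a i) v v' + vertexWeight (a i) v * vertexWeight (a i) v')
        ≤ ∑ i, (pairWeight (w i) v v' + α * vertexWeight (a i) v') := by
          gcongr with i
          · exact pairWeight_mono (thinned_le hw hL.le i) v v'
          · exact ha0 i v'
          · exact haα i v
      _ ≤ α + α * l := by
          rw [sum_add_distrib, ← mul_sum]
          gcongr
          · exact hpair v v' h
          · exact (hav v').trans hLl

end Round

section Moments

variable {Ω V K : Type*} [Fintype Ω]

/-- The probability that the random set `W` contains `f`. -/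
noncomputable def survival (p : Ω → ℝ) (W : Ω → Finset V) (f : Finset V) : ℝ :=
  ∑ ω with f ⊆ W ω, p ω

/-- The random set `W` contains each set of at most `2 * R` vertices with nearly the probability
it would have if it contained each vertex independently with probability `t⁻¹`. The number `B`
bounds the inverse of the probability of containing a set of at most `R` vertices. -/
structure IsQuasirandom (p : Ω → ℝ) (W : Ω → Finset V) (t : ℝ) (R : ℕ) (B ξ : ℝ) : Prop where
  mem_stdSimplex : p ∈ stdSimplex ℝ Ω
  one_le : 1 ≤ t
  pow_le : t ^ R ≤ B
  abs_survival_sub_le : ∀ f : Finset V, #f ≤ 2 * R → |survival p W f - t⁻¹ ^ #f| ≤ ξ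

/-- Nonnegative weights `c` on the sets `F k`, which have at most `R` elements and include the
core `f₀`. -/
structure HasCore (c : K → ℝ) (F : K → Finset V) (f₀ : Finset V) (R : ℕ) : Prop where
  nonneg : 0 ≤ c
  core_subset : ∀ k, c k ≠ 0 → f₀ ⊆ F k
  card_le : ∀ k, c k ≠ 0 → #(F k) ≤ R

/-- The weight `c` of the sets `F k` included in `W`, boosted by the inverse of the probability of
this inclusion when each vertex is in `W` independently with probability `t⁻¹`. -/
noncomputable def survivingWeight [Fintype K] (c : K → ℝ) (F : K → Finset V) (t : ℝ)
    (W : Finset V) : ℝ :=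
  ∑ k with F k ⊆ W, c k * t ^ #(F k)

namespace IsQuasirandom

variable {p : Ω → ℝ} {W : Ω → Finset V} {t B ξ : ℝ} {R : ℕ}

theorem pos (h : IsQuasirandom p W t R B ξ) : 0 < t := one_pos.trans_le h.one_le

theorem one_le_bound (h : IsQuasirandom p W t R B ξ) : 1 ≤ B :=
  (one_le_pow₀ h.one_le).trans h.pow_le

theorem error_nonneg (h : IsQuasirandom p W t R B ξ) : 0 ≤ ξ :=
  (abs_nonneg _).trans (h.abs_survival_sub_le ∅ (by simp))

theorem pow_card_le (h : IsQuasirandom p W t R B ξ) {n : ℕ} (hn : n ≤ R) : t ^ n ≤ B :=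
  (pow_le_pow_right₀ h.one_le hn).trans h.pow_le

theorem abs_pow_mul_survival_sub_one_le (h : IsQuasirandom p W t R B ξ) {f : Finset V}
    (hf : #f ≤ 2 * R) : |t ^ #f * survival p W f - 1| ≤ t ^ #f * ξ := by
  have ht : 0 < t ^ #f := pow_pos h.pos _
  calc |t ^ #f * survival p W f - 1| = |t ^ #f * (survival p W f - t⁻¹ ^ #f)| := by
        rw [mul_sub, inv_pow, mul_inv_cancel₀ ht.ne']
    _ ≤ t ^ #f * ξ := by
        rw [abs_mul, abs_of_pos ht]
        exact mul_le_mul_of_nonneg_left (h.abs_survival_sub_le f hf) ht.le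

theorem survival_singleton_le (h : IsQuasirandom p W t R B ξ) (hR : 1 ≤ R) (v : V) :
    survival p W {v} ≤ t⁻¹ + ξ := by
  have := (abs_le.1 (h.abs_survival_sub_le {v} (by rw [card_singleton]; omega))).2
  rw [card_singleton, pow_one] at this
  exact sub_le_iff_le_add'.1 this

theorem sum_survival_singleton_le [Fintype V] (h : IsQuasirandom p W t R B ξ) (hR : 1 ≤ R) :
    ∑ v, survival p W {v} ≤ (t⁻¹ + ξ) * Fintype.card V := by
  refine (sum_le_card_nsmul univ _ _ fun v _ ↦ h.survival_singleton_le hR v).trans_eq ?_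
  rw [card_univ, nsmul_eq_mul, mul_comm]

end IsQuasirandom

variable [Fintype K] {c : K → ℝ} {F : K → Finset V} {f₀ : Finset V} {R : ℕ}

theorem survivingWeight_eq_zero (hc : HasCore c F f₀ R) (t : ℝ) {W : Finset V} (hW : ¬ f₀ ⊆ W) :
    survivingWeight c F t W = 0 :=
  sum_eq_zero fun k hk ↦ by
    have : c k = 0 := not_not.1 fun h ↦ hW ((hc.core_subset k h).trans (mem_filter.1 hk).2)
    rw [this, zero_mul]

theorem sum_mul_survivingWeight (p : Ω → ℝ) (W : Ω → Finset V) (c : K → ℝ) (F : K → Finset V)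
    (t : ℝ) :
    ∑ ω, p ω * survivingWeight c F t (W ω) = ∑ k, c k * (t ^ #(F k) * survival p W (F k)) := by
  simp only [survival, survivingWeight, mul_sum, sum_filter]
  rw [sum_comm]
  exact sum_congr rfl fun k _ ↦ sum_congr rfl fun ω _ ↦ by split_ifs <;> ring

theorem sum_mul_survivingWeight_sq (p : Ω → ℝ) (W : Ω → Finset V) (c : K → ℝ)
    (F : K → Finset V) (t : ℝ) :
    ∑ ω, p ω * survivingWeight c F t (W ω) ^ 2 =
      ∑ k, ∑ k', c k * c k' * (t ^ (#(F k) + #(F k')) * survival p W (F k ∪ F k')) := by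
  simp only [survival, survivingWeight, sq, sum_mul_sum, sum_filter]
  simp only [mul_sum]
  rw [sum_comm]
  refine sum_congr rfl fun k _ ↦ ?_
  rw [sum_comm]
  refine sum_congr rfl fun k' _ ↦ sum_congr rfl fun ω _ ↦ ?_
  by_cases h : F k ⊆ W ω <;> by_cases h' : F k' ⊆ W ω <;> simp [union_subset_iff, h, h']
  ring

variable {p : Ω → ℝ} {W : Ω → Finset V} {t B ξ : ℝ}

theorem le_sum_mul_survivingWeight (hW : IsQuasirandom p W t R B ξ) (hc : HasCore c F f₀ R) :
    (1 - ξ * B) * ∑ k, c k ≤ ∑ ω, p ω * survivingWeight c F t (W ω) := by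
  rw [sum_mul_survivingWeight, mul_sum]
  refine sum_le_sum fun k _ ↦ ?_
  by_cases hk : c k = 0
  · simp [hk]
  have hcard := hc.card_le k hk
  have hbound : t ^ #(F k) * ξ ≤ ξ * B := by
    rw [mul_comm]
    exact mul_le_mul_of_nonneg_left (hW.pow_card_le hcard) hW.error_nonneg
  have hsurv := (abs_le.1 (hW.abs_pow_mul_survival_sub_one_le (by omega : #(F k) ≤ 2 * R))).1
  rw [mul_comm]
  exact mul_le_mul_of_nonneg_left (by linarith) (hc.nonneg k)

theorem pow_mul_survival_union_le (hW : IsQuasirandom p W t R B ξ) {f f' : Finset V}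
    (hf : #f ≤ R) (hf' : #f' ≤ R) :
    t ^ (#f + #f') * survival p W (f ∪ f') ≤ t ^ #(f ∩ f') + B ^ 2 * ξ := by
  have hsurv := (abs_le.1 (hW.abs_pow_mul_survival_sub_one_le
    ((card_union_le f f').trans (by omega)))).2
  have hbound : t ^ (#f + #f') ≤ B ^ 2 := by
    rw [pow_add, sq]
    exact mul_le_mul (hW.pow_card_le hf) (hW.pow_card_le hf') (pow_pos hW.pos _).le
      (zero_le_one.trans hW.one_le_bound)
  calc t ^ (#f + #f') * survival p W (f ∪ f')
      = t ^ #(f ∩ f') * (t ^ #(f ∪ f') * survival p W (f ∪ f')) := by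
        rw [← card_union_add_card_inter, pow_add]; ring
    _ ≤ t ^ #(f ∩ f') * (1 + t ^ #(f ∪ f') * ξ) :=
        mul_le_mul_of_nonneg_left (by linarith) (pow_pos hW.pos _).le
    _ = t ^ #(f ∩ f') + t ^ (#f + #f') * ξ := by
        rw [← card_union_add_card_inter, pow_add]; ring
    _ ≤ t ^ #(f ∩ f') + B ^ 2 * ξ :=
        add_le_add_right (mul_le_mul_of_nonneg_right hbound hW.error_nonneg) _

theorem sum_mul_survivingWeight_sq_le (hW : IsQuasirandom p W t R B ξ) (hc : HasCore c F f₀ R) :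
    ∑ ω, p ω * survivingWeight c F t (W ω) ^ 2 ≤
      (t ^ #f₀ + B ^ 2 * ξ) * (∑ k, c k) ^ 2 +
        B * ∑ k, ∑ k' with F k ∩ F k' ≠ f₀, c k * c k' := by
  have hpair (k k' : K) : c k * c k' * (t ^ (#(F k) + #(F k')) * survival p W (F k ∪ F k')) ≤
      (t ^ #f₀ + B ^ 2 * ξ) * (c k * c k') +
        B * (if F k ∩ F k' ≠ f₀ then c k * c k' else 0) := by
    by_cases hk : c k = 0
    · simp [hk]
    by_cases hk' : c k' = 0
    · simp [hk']
    have hinter : t ^ #(F k ∩ F k') ≤ t ^ #f₀ + if F k ∩ F k' ≠ f₀ then B else 0 := by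
      split_ifs with h
      · exact le_add_of_nonneg_of_le (pow_pos hW.pos _).le
          (hW.pow_card_le ((card_le_card inter_subset_left).trans (hc.card_le k hk)))
      · rw [not_not.1 h, add_zero]
    calc c k * c k' * (t ^ (#(F k) + #(F k')) * survival p W (F k ∪ F k'))
        ≤ c k * c k' * (t ^ #f₀ + (if F k ∩ F k' ≠ f₀ then B else 0) + B ^ 2 * ξ) :=
          mul_le_mul_of_nonneg_left ((pow_mul_survival_union_le hW (hc.card_le k hk)
            (hc.card_le k' hk')).trans (add_le_add_left hinter _))
            (mul_nonneg (hc.nonneg k) (hc.nonneg k'))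
      _ = _ := by split_ifs <;> ring
  rw [sum_mul_survivingWeight_sq, sq (∑ k, c k), sum_mul_sum]
  simp only [mul_sum, ← sum_add_distrib, sum_filter (fun k' ↦ F _ ∩ F k' ≠ f₀)]
  exact sum_le_sum fun k _ ↦ sum_le_sum fun k' _ ↦ hpair k k'

theorem sum_mul_sq_survivingWeight_sub_le (hW : IsQuasirandom p W t R B ξ)
    (hc : HasCore c F f₀ R) (hf₀ : #f₀ ≤ R) :
    ∑ ω with f₀ ⊆ W ω, p ω * (survivingWeight c F t (W ω) - (∑ k, c k) * t ^ #f₀) ^ 2 ≤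
      4 * ξ * B ^ 2 * (∑ k, c k) ^ 2 +
        B * ∑ k, ∑ k' with F k ∩ F k' ≠ f₀, c k * c k' := by
  set S : Ω → ℝ := fun ω ↦ survivingWeight c F t (W ω)
  set D := ∑ k, c k
  set u := t ^ #f₀
  have hexpand : ∑ ω with f₀ ⊆ W ω, p ω * (S ω - D * u) ^ 2 =
      ∑ ω, p ω * S ω ^ 2 - 2 * D * u * ∑ ω, p ω * S ω + D ^ 2 * (u ^ 2 * survival p W f₀) := by
    simp only [survival, sum_filter, mul_sum]
    rw [← sum_sub_distrib, ← sum_add_distrib]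
    refine sum_congr rfl fun ω _ ↦ ?_
    split_ifs with h
    · ring
    · simp only [S, survivingWeight_eq_zero hc t h]; ring
  have hsecond := sum_mul_survivingWeight_sq_le hW hc
  have hcore : u ^ 2 * survival p W f₀ ≤ u + B ^ 2 * ξ := by
    simpa only [union_idempotent, inter_self, ← two_mul, pow_mul'] using
      pow_mul_survival_union_le hW hf₀ hf₀
  have hD : 0 ≤ D := sum_nonneg fun k _ ↦ hc.nonneg k
  have hu : 0 ≤ u := (pow_pos hW.pos _).le
  have hfirst : 2 * D * u * ((1 - ξ * B) * D) ≤ 2 * D * u * ∑ ω, p ω * S ω :=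
    mul_le_mul_of_nonneg_left (le_sum_mul_survivingWeight hW hc) (by positivity)
  have huB : u * (ξ * B * D ^ 2) ≤ B * (ξ * B * D ^ 2) :=
    mul_le_mul_of_nonneg_right (hW.pow_card_le hf₀) (mul_nonneg (mul_nonneg hW.error_nonneg
      (zero_le_one.trans hW.one_le_bound)) (sq_nonneg D))
  rw [hexpand]
  linarith [mul_le_mul_of_nonneg_left hcore (sq_nonneg D)]

theorem sum_inter_ne_le (hc : HasCore c F f₀ R) {A : ℝ} (hA : 0 ≤ A)
    (hcA : ∀ v, v ∉ f₀ → ∑ k with v ∈ F k, c k ≤ A) :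
    ∑ k, ∑ k' with F k ∩ F k' ≠ f₀, c k * c k' ≤ R * A * ∑ k, c k := by
  rw [mul_sum]
  refine sum_le_sum fun k _ ↦ ?_
  by_cases hk : c k = 0
  · simp [hk]
  have hcover (k' : K) : (if F k ∩ F k' ≠ f₀ then c k' else 0) ≤
      ∑ v ∈ F k \ f₀, if v ∈ F k' then c k' else 0 := by
    have hterm (v : V) : 0 ≤ if v ∈ F k' then c k' else 0 := ite_nonneg (hc.nonneg k') le_rfl
    split_ifs with h
    · by_cases hk' : c k' = 0
      · simp [hk']
      obtain ⟨v, hv, hv'⟩ : ∃ v ∈ F k ∩ F k', v ∉ f₀ := by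
        by_contra! hcon
        exact h (Subset.antisymm hcon (subset_inter (hc.core_subset k hk) (hc.core_subset k' hk')))
      rw [mem_inter] at hv
      simpa [hv.2] using single_le_sum (fun v _ ↦ hterm v) (mem_sdiff.2 ⟨hv.1, hv'⟩)
    · exact sum_nonneg fun v _ ↦ hterm v
  calc ∑ k' with F k ∩ F k' ≠ f₀, c k * c k'
      ≤ c k * ∑ k', ∑ v ∈ F k \ f₀, if v ∈ F k' then c k' else 0 := by
        rw [← mul_sum, sum_filter]
        exact mul_le_mul_of_nonneg_left (sum_le_sum fun k' _ ↦ hcover k') (hc.nonneg k)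
    _ = c k * ∑ v ∈ F k \ f₀, ∑ k' with v ∈ F k', c k' := by
        rw [sum_comm]; simp only [sum_filter]
    _ ≤ c k * ∑ _ ∈ F k \ f₀, A := mul_le_mul_of_nonneg_left
        (sum_le_sum fun v hv ↦ hcA v (mem_sdiff.1 hv).2) (hc.nonneg k)
    _ ≤ c k * (R * A) := by
        rw [sum_const, nsmul_eq_mul]
        refine mul_le_mul_of_nonneg_left (mul_le_mul_of_nonneg_right ?_ hA) (hc.nonneg k)
        exact_mod_cast (card_le_card sdiff_subset).trans (hc.card_le k hk)
    _ = R * A * c k := mul_comm _ _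

/-- The size, relative to the mean, of the standard deviation of a weight that survives in a
quasirandom set. -/
noncomputable def deviation (R : ℕ) (A B ξ : ℝ) : ℝ := √(4 * ξ * B ^ 2 + B ^ 2 * (R * A))

theorem sum_mul_abs_survivingWeight_sub_le (hW : IsQuasirandom p W t R B ξ)
    (hc : HasCore c F f₀ R) (hf₀ : #f₀ ≤ R) {A : ℝ} (hA : 0 ≤ A)
    (hcA : ∀ v, v ∉ f₀ → ∑ k with v ∈ F k, c k ≤ A) {M : ℝ} (hM : ∑ k, c k ≤ M)
    (hBM : 1 ≤ B * M) :
    ∑ ω with f₀ ⊆ W ω, p ω * |survivingWeight c F t (W ω) - (∑ k, c k) * t ^ #f₀| ≤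
      M * deviation R A B ξ := by
  set D := ∑ k, c k
  set Y : Ω → ℝ := fun ω ↦ survivingWeight c F t (W ω) - D * t ^ #f₀
  have hD : 0 ≤ D := sum_nonneg fun k _ ↦ hc.nonneg k
  have hB : 0 ≤ B := zero_le_one.trans hW.one_le_bound
  have hξ : 0 ≤ ξ := hW.error_nonneg
  have hDM : D ≤ B * M ^ 2 := by
    calc D ≤ M * 1 := by rwa [mul_one]
      _ ≤ M * (B * M) := mul_le_mul_of_nonneg_left hBM (hD.trans hM)
      _ = B * M ^ 2 := by ring
  calc ∑ ω with f₀ ⊆ W ω, p ω * |Y ω| = ∑ ω, p ω * |if f₀ ⊆ W ω then Y ω else 0| := by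
        simp only [sum_filter, apply_ite abs, abs_zero, mul_ite, mul_zero]
    _ ≤ √(∑ ω, p ω * (if f₀ ⊆ W ω then Y ω else 0) ^ 2) :=
        sum_mul_abs_le_sqrt hW.mem_stdSimplex _
    _ = √(∑ ω with f₀ ⊆ W ω, p ω * Y ω ^ 2) := by
        simp only [sum_filter, ite_pow, ne_eq, OfNat.ofNat_ne_zero, not_false_eq_true, zero_pow,
          mul_ite, mul_zero]
    _ ≤ √(4 * ξ * B ^ 2 * D ^ 2 + B * (R * A * D)) :=
        Real.sqrt_le_sqrt ((sum_mul_sq_survivingWeight_sub_le hW hc hf₀).trans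
          (add_le_add_right (mul_le_mul_of_nonneg_left (sum_inter_ne_le hc hA hcA) hB) _))
    _ ≤ √(4 * ξ * B ^ 2 * M ^ 2 + B * (R * A * (B * M ^ 2))) := by gcongr
    _ = M * deviation R A B ξ := by
        rw [deviation, ← Real.sqrt_sq (hD.trans hM), ← Real.sqrt_mul (sq_nonneg _),
          Real.sqrt_sq (hD.trans hM)]
        ring_nf

end Moments

section Sparse

variable {V : Type*} {c : Finset V → ℝ} {R : ℕ} {A t B : ℝ}

/-- The weights `c` restricted to the subsets of `W`, each multiplied by the inverse of the
probability that a random set containing each vertex with probability `t⁻¹` includes it. -/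
noncomputable def boost (t : ℝ) (W : Finset V) (c : Finset V → ℝ) (e : Finset V) : ℝ :=
  if e ⊆ W then c e * t ^ #e else 0

theorem boost_nonneg (ht : 0 ≤ t) (W : Finset V) (hc : 0 ≤ c) : 0 ≤ boost t W c := fun e ↦
  ite_nonneg (mul_nonneg (hc e) (pow_nonneg ht _)) le_rfl

theorem boost_le (ht : 1 ≤ t) (htB : t ^ R ≤ B) (W : Finset V) (hc : 0 ≤ c)
    (hR : ∀ e, c e ≠ 0 → #e ≤ R) : boost t W c ≤ B • c := fun e ↦ by
  have hB : 0 ≤ B := (pow_nonneg (zero_le_one.trans ht) R).trans htB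
  rw [Pi.smul_apply, smul_eq_mul, boost]
  split_ifs
  · by_cases h : c e = 0
    · simp [h]
    · rw [mul_comm]
      exact mul_le_mul_of_nonneg_right ((pow_le_pow_right₀ ht (hR e h)).trans htB) (hc e)
  · exact mul_nonneg hB (hc e)

theorem ne_zero_of_boost_ne_zero {W e : Finset V} (h : boost t W c e ≠ 0) : c e ≠ 0 :=
  left_ne_zero_of_mul (ite_ne_right_iff.1 h).2

variable {ι : Type*} [Fintype V] [Fintype ι]

/-- Weights on sets of at most `R` vertices that are evenly spread: no vertex has weight more than
`A` in a single `ν i`, and no pair of vertices has weight more than `A` altogether. -/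
structure IsSparse (ν : ι → Finset V → ℝ) (R : ℕ) (A : ℝ) : Prop where
  bound_nonneg : 0 ≤ A
  nonneg : ∀ i, 0 ≤ ν i
  card_le : ∀ i e, ν i e ≠ 0 → #e ≤ R
  vertexWeight_le : ∀ i v, vertexWeight (ν i) v ≤ A
  sum_pairWeight_le : ∀ v v', v ≠ v' → ∑ i, pairWeight (ν i) v v' ≤ A

/-- The weights, indexed by `ι × Finset V`, of the sets that contain `v`. -/
noncomputable def starWeight (ν : ι → Finset V → ℝ) (v : V) (k : ι × Finset V) : ℝ :=
  if v ∈ k.2 then ν k.1 k.2 else 0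

variable {ν μ : ι → Finset V → ℝ}

theorem IsSparse.mono (hμ : IsSparse μ R A) (hν : ∀ i, 0 ≤ ν i) (h : ∀ i, ν i ≤ μ i) :
    IsSparse ν R A where
  bound_nonneg := hμ.bound_nonneg
  nonneg := hν
  card_le i e he := hμ.card_le i e (((hν i e).lt_of_ne' he).trans_le (h i e)).ne'
  vertexWeight_le i v := (vertexWeight_mono (h i) v).trans (hμ.vertexWeight_le i v)
  sum_pairWeight_le v v' hv :=
    (sum_le_sum fun i _ ↦ pairWeight_mono (h i) v v').trans (hμ.sum_pairWeight_le v v' hv)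

theorem IsSparse.smul (hμ : IsSparse μ R A) (hB : 0 ≤ B) :
    IsSparse (fun i ↦ B • μ i) R (B * A) where
  bound_nonneg := mul_nonneg hB hμ.bound_nonneg
  nonneg i := smul_nonneg hB (hμ.nonneg i)
  card_le i e he := hμ.card_le i e (right_ne_zero_of_mul he)
  vertexWeight_le i v := by
    rw [vertexWeight_smul]
    exact mul_le_mul_of_nonneg_left (hμ.vertexWeight_le i v) hB
  sum_pairWeight_le v v' hv := by
    simp only [pairWeight_smul, ← mul_sum]
    exact mul_le_mul_of_nonneg_left (hμ.sum_pairWeight_le v v' hv) hB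

theorem IsSparse.boost (hμ : IsSparse μ R A) (ht : 1 ≤ t) (htB : t ^ R ≤ B) (W : Finset V) :
    IsSparse (fun i ↦ boost t W (μ i)) R (B * A) :=
  (hμ.smul ((pow_nonneg (zero_le_one.trans ht) R).trans htB)).mono
    (fun i ↦ boost_nonneg (zero_le_one.trans ht) W (hμ.nonneg i))
    fun i ↦ boost_le ht htB W (hμ.nonneg i) (hμ.card_le i)

theorem sum_boost (t : ℝ) (W : Finset V) (c : Finset V → ℝ) :
    ∑ e, boost t W c e = survivingWeight c id t W := by
  simp only [boost, survivingWeight, sum_filter, id]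

theorem sum_starWeight (ν : ι → Finset V → ℝ) (v : V) :
    ∑ k, starWeight ν v k = ∑ i, vertexWeight (ν i) v := by
  simp only [Fintype.sum_prod_type, starWeight, vertexWeight, sum_filter]

theorem survivingWeight_starWeight (ν : ι → Finset V → ℝ) (v : V) (t : ℝ) (W : Finset V) :
    survivingWeight (starWeight ν v) Prod.snd t W = ∑ i, vertexWeight (boost t W (ν i)) v := by
  simp only [survivingWeight, starWeight, vertexWeight, sum_filter, Fintype.sum_prod_type, boost]
  exact sum_congr rfl fun i _ ↦ sum_congr rfl fun e _ ↦ by split_ifs <;> simp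

theorem IsSparse.hasCore_starWeight (hν : IsSparse ν R A) (v : V) :
    HasCore (starWeight ν v) Prod.snd {v} R where
  nonneg k := ite_nonneg (hν.nonneg k.1 k.2) le_rfl
  core_subset _ hk := singleton_subset_iff.2 (ite_ne_right_iff.1 hk).1
  card_le _ hk := hν.card_le _ _ (ite_ne_right_iff.1 hk).2

theorem sum_filter_mem_starWeight (ν : ι → Finset V → ℝ) (v v' : V) :
    ∑ k with v' ∈ k.2, starWeight ν v k = ∑ i, pairWeight (ν i) v v' := by
  simp only [starWeight, pairWeight, sum_filter, Fintype.sum_prod_type]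
  exact sum_congr rfl fun i _ ↦ sum_congr rfl fun e _ ↦ by split_ifs <;> simp_all

theorem sum_vertexWeight_boost_eq_zero (ν : ι → Finset V → ℝ) (t : ℝ) {W : Finset V} {v : V}
    (hv : v ∉ W) : ∑ i, vertexWeight (boost t W (ν i)) v = 0 :=
  sum_eq_zero fun _ _ ↦ sum_eq_zero fun _ he ↦ if_neg fun h ↦ hv (h (mem_filter.1 he).2)

end Sparse

section Cost

variable {Ω V ι : Type*} [Fintype Ω] [Fintype V] [Fintype ι] {p : Ω → ℝ} {W : Ω → Finset V}
  {t B ξ A M l L : ℝ} {R : ℕ} {ν : ι → Finset V → ℝ}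

theorem sum_mul_posPart_boost_sub_one_le (hW : IsQuasirandom p W t R B ξ)
    (hν : IsSparse ν R A) (i : ι) (h1 : ∑ e, ν i e ≤ 1) (h0 : ν i ∅ = 0) :
    ∑ ω, p ω * (∑ e, boost t (W ω) (ν i) e - 1)⁺ ≤
      deviation R A B ξ * ∑ v, vertexWeight (ν i) v := by
  set n := ∑ e, ν i e
  have hn0 : 0 ≤ n := sum_nonneg fun e _ ↦ hν.nonneg i e
  have hnv : n ≤ ∑ v, vertexWeight (ν i) v := by
    rw [sum_vertexWeight]
    refine sum_le_sum fun e _ ↦ ?_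
    obtain rfl | he := e.eq_empty_or_nonempty
    · simp [h0]
    · exact le_mul_of_one_le_left (hν.nonneg i e) (by exact_mod_cast he.card_pos)
  refine le_trans ?_ (mul_le_mul_of_nonneg_left hnv (Real.sqrt_nonneg _))
  rcases le_total (B * n) 1 with hBn | hBn
  · refine (sum_eq_zero fun ω _ ↦ ?_).trans_le (mul_nonneg (Real.sqrt_nonneg _) hn0)
    rw [posPart_eq_zero.2, mul_zero]
    refine sub_nonpos.2 (le_trans ?_ hBn)
    simpa [n, mul_sum] using sum_le_sum fun e (_ : e ∈ univ) ↦
      boost_le hW.one_le hW.pow_le (W ω) (hν.nonneg i) (hν.card_le i) e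
  · have hcore : HasCore (ν i) id ∅ R :=
      ⟨hν.nonneg i, fun e _ ↦ empty_subset e, hν.card_le i⟩
    have hdev := sum_mul_abs_survivingWeight_sub_le hW hcore (Nat.zero_le R) hν.bound_nonneg
      (fun v _ ↦ hν.vertexWeight_le i v) le_rfl hBn
    simp only [empty_subset, filter_true, card_empty, pow_zero, mul_one, ← sum_boost] at hdev
    rw [mul_comm]
    refine (sum_le_sum fun ω _ ↦ mul_le_mul_of_nonneg_left ?_ (hW.mem_stdSimplex.1 ω)).trans hdev
    exact sup_le ((sub_le_sub_left h1 _).trans (le_abs_self _)) (abs_nonneg _)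

theorem sum_mul_posPart_vertexWeight_boost_sub_le (hW : IsQuasirandom p W t R B ξ)
    (hν : IsSparse ν R A) (hR : 1 ≤ R) (hM1 : 1 ≤ M) (hL : 0 ≤ L) (v : V)
    (hM : ∑ i, vertexWeight (ν i) v ≤ M) :
    ∑ ω, p ω * (∑ i, vertexWeight (boost t (W ω) (ν i)) v - L)⁺ ≤
      M * deviation R A B ξ + ((∑ i, vertexWeight (ν i) v) * t - L)⁺ := by
  set d := ∑ i, vertexWeight (ν i) v
  set X : Ω → ℝ := fun ω ↦ ∑ i, vertexWeight (boost t (W ω) (ν i)) v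
  have hdev : ∑ ω with v ∈ W ω, p ω * |X ω - d * t| ≤ M * deviation R A B ξ := by
    have := sum_mul_abs_survivingWeight_sub_le hW (hν.hasCore_starWeight v) (by simpa using hR)
      hν.bound_nonneg (fun v' hv' ↦ (sum_filter_mem_starWeight ν v v').trans_le
        (hν.sum_pairWeight_le v v' (by simpa [eq_comm] using hv')))
      ((sum_starWeight ν v).trans_le hM) (one_le_mul_of_one_le_of_one_le hW.one_le_bound hM1)
    simpa only [survivingWeight_starWeight, sum_starWeight, singleton_subset_iff, card_singleton,
      pow_one] using this
  have hpt (ω : Ω) : (X ω - L)⁺ ≤ (if v ∈ W ω then |X ω - d * t| else 0) + (d * t - L)⁺ := by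
    split_ifs with h
    · rw [← sub_add_sub_cancel (X ω) (d * t) L]
      exact sup_le (add_le_add (le_abs_self _) le_sup_left) (by positivity)
    · simp only [X, sum_vertexWeight_boost_eq_zero ν t h, zero_sub]
      rw [posPart_eq_zero.2 (neg_nonpos.2 hL), zero_add]
      exact posPart_nonneg _
  calc ∑ ω, p ω * (X ω - L)⁺
      ≤ ∑ ω, p ω * ((if v ∈ W ω then |X ω - d * t| else 0) + (d * t - L)⁺) :=
        sum_le_sum fun ω _ ↦ mul_le_mul_of_nonneg_left (hpt ω) (hW.mem_stdSimplex.1 ω)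
    _ = ∑ ω with v ∈ W ω, p ω * |X ω - d * t| + (d * t - L)⁺ := by
        simp only [mul_add, sum_add_distrib, ← sum_mul, hW.mem_stdSimplex.2, one_mul, sum_filter,
          mul_ite, mul_zero]
    _ ≤ M * deviation R A B ξ + (d * t - L)⁺ := add_le_add_left hdev _

theorem sum_mul_sum_sub_vertexWeight_boost_le (hW : IsQuasirandom p W t R B ξ)
    (hν : IsSparse ν R A) (hR : 1 ≤ R) (hl : 0 ≤ l) :
    ∑ ω, p ω * ∑ v ∈ W ω, (l - ∑ i, vertexWeight (boost t (W ω) (ν i)) v) ≤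
      ∑ v, (l * (t⁻¹ + ξ) - (1 - ξ * B) * ∑ i, vertexWeight (ν i) v) := by
  have hsplit (ω : Ω) : p ω * ∑ v ∈ W ω, (l - ∑ i, vertexWeight (boost t (W ω) (ν i)) v) =
      ∑ v, (l * (if {v} ⊆ W ω then p ω else 0) -
        p ω * ∑ i, vertexWeight (boost t (W ω) (ν i)) v) := by
    rw [mul_sum, ← sum_subset (subset_univ (W ω)) fun v _ hv ↦ by
      simp [hv, sum_vertexWeight_boost_eq_zero ν t hv]]
    exact sum_congr rfl fun v hv ↦ by simp [hv]; ring
  simp only [hsplit]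
  rw [sum_comm]
  refine sum_le_sum fun v _ ↦ ?_
  rw [sum_sub_distrib, ← mul_sum, ← sum_filter]
  have hmean := le_sum_mul_survivingWeight hW (hν.hasCore_starWeight v)
  simp only [sum_starWeight, survivingWeight_starWeight] at hmean
  exact sub_le_sub (mul_le_mul_of_nonneg_left (hW.survival_singleton_le hR v) hl) hmean

theorem sum_mul_roundCost_le (hW : IsQuasirandom p W t R B ξ) (hν : IsSparse ν R A)
    (hν1 : ∀ i, ∑ e, ν i e ≤ 1) (hν0 : ∀ i, ν i ∅ = 0) (hR : 1 ≤ R) (hl : 0 ≤ l) (hL : 0 ≤ L)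
    (hM1 : 1 ≤ M) (hM : ∀ v, ∑ i, vertexWeight (ν i) v ≤ M) :
    ∑ ω, p ω * roundCost (fun i ↦ boost t (W ω) (ν i)) (W ω) R l L ≤
      ∑ v, (l * (t⁻¹ + ξ) - (1 - ξ * B) * ∑ i, vertexWeight (ν i) v) +
        R * (2 * M * deviation R A B ξ * Fintype.card V +
          ∑ v, ((∑ i, vertexWeight (ν i) v) * t - L)⁺) := by
  set κ := deviation R A B ξ
  have hκ : 0 ≤ κ := Real.sqrt_nonneg _
  have hindices : ∑ i, ∑ ω, p ω * (∑ e, boost t (W ω) (ν i) e - 1)⁺ ≤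
      M * κ * Fintype.card V := by
    calc ∑ i, ∑ ω, p ω * (∑ e, boost t (W ω) (ν i) e - 1)⁺
        ≤ ∑ i, κ * ∑ v, vertexWeight (ν i) v := sum_le_sum fun i _ ↦
          sum_mul_posPart_boost_sub_one_le hW hν i (hν1 i) (hν0 i)
      _ = κ * ∑ v, ∑ i, vertexWeight (ν i) v := by rw [← mul_sum, sum_comm]
      _ ≤ κ * ∑ _ : V, M := mul_le_mul_of_nonneg_left (sum_le_sum fun v _ ↦ hM v) hκ
      _ = M * κ * Fintype.card V := by rw [sum_const, nsmul_eq_mul, card_univ]; ring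
  have hvertices : ∑ v, ∑ ω, p ω * (∑ i, vertexWeight (boost t (W ω) (ν i)) v - L)⁺ ≤
      M * κ * Fintype.card V + ∑ v, ((∑ i, vertexWeight (ν i) v) * t - L)⁺ := by
    refine (sum_le_sum fun v _ ↦ sum_mul_posPart_vertexWeight_boost_sub_le hW hν hR hM1 hL v
      (hM v)).trans_eq ?_
    rw [sum_add_distrib, sum_const, nsmul_eq_mul, card_univ, mul_comm]
  have hexcess : ∑ ω, p ω * excess (fun i ↦ boost t (W ω) (ν i)) L ≤
      2 * M * κ * Fintype.card V + ∑ v, ((∑ i, vertexWeight (ν i) v) * t - L)⁺ := by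
    simp only [excess, mul_add, sum_add_distrib, mul_sum]
    rw [sum_comm, sum_comm (t := univ (α := V))]
    linarith
  simp only [roundCost, mul_add (p _), sum_add_distrib, mul_left_comm (p _) (R : ℝ), ← mul_sum]
  exact add_le_add (sum_mul_sum_sub_vertexWeight_boost_le hW hν hR hl)
    (mul_le_mul_of_nonneg_left hexcess (Nat.cast_nonneg R))

end Cost

section Rounds

universe u v

variable {V : Type u} {ι : Type v} {μ : ι → Finset V → ℝ}

/-- The weights of the indices assigned to round `j` by `τ`, without the empty set: its being chosen
could not be told apart from no choice having been made. -/
noncomputable def roundFamily (μ : ι → Finset V → ℝ) (τ : ι → ℕ) (j : ℕ) (i : ι) (e : Finset V) :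
    ℝ :=
  if τ i = j ∧ e ≠ ∅ then μ i e else 0

theorem roundFamily_nonneg (hμ : ∀ i, 0 ≤ μ i) (τ : ι → ℕ) (j : ℕ) (i : ι) :
    0 ≤ roundFamily μ τ j i := fun e ↦
  ite_nonneg (hμ i e) le_rfl

theorem roundFamily_le (hμ : ∀ i, 0 ≤ μ i) (τ : ι → ℕ) (j : ℕ) (i : ι) :
    roundFamily μ τ j i ≤ μ i := fun e ↦ by
  rw [roundFamily]
  split_ifs
  exacts [le_rfl, hμ i e]

/-- A random partial choice of sets: `E ω i` is the set chosen for the index `i`, or empty if no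
set has been chosen yet, and the later choices are only expected to cover vertices of `W ω`. -/
structure RandomCover (μ : ι → Finset V → ℝ) where
  Ω : Type (max u v)
  [fintype : Fintype Ω]
  p : Ω → ℝ
  W : Ω → Finset V
  E : Ω → ι → Finset V
  mem_stdSimplex : p ∈ stdSimplex ℝ Ω
  eq_empty_or : ∀ ω, p ω ≠ 0 → ∀ i, E ω i = ∅ ∨ μ i (E ω i) ≠ 0

attribute [instance] RandomCover.fintype

variable [Fintype V]

/-- The random cover in which nothing has been chosen. -/
def RandomCover.start (μ : ι → Finset V → ℝ) : RandomCover μ where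
  Ω := PUnit
  p _ := 1
  W _ := univ
  E _ _ := ∅
  mem_stdSimplex := ⟨fun _ ↦ zero_le_one, by simp⟩
  eq_empty_or _ _ _ := .inl rfl

theorem RandomCover.survival_start (μ : ι → Finset V → ℝ) (f : Finset V) :
    survival (start μ).p (start μ).W f = 1 := by
  change ∑ _ : PUnit with f ⊆ univ, (1 : ℝ) = 1
  simp

variable [Fintype ι]

theorem IsSparse.roundFamily {R : ℕ} {A : ℝ} (hμ : IsSparse μ R A) (τ : ι → ℕ) (j : ℕ) :
    IsSparse (roundFamily μ τ j) R A :=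
  hμ.mono (roundFamily_nonneg hμ.nonneg τ j) (roundFamily_le hμ.nonneg τ j)

theorem sum_vertexWeight_roundFamily (μ : ι → Finset V → ℝ) (τ : ι → ℕ) (j : ℕ) (v : V) :
    ∑ i, vertexWeight (roundFamily μ τ j i) v = ∑ i with τ i = j, vertexWeight (μ i) v := by
  rw [sum_filter]
  refine sum_congr rfl fun i _ ↦ ?_
  split_ifs with h
  · exact sum_congr rfl fun e he ↦ if_pos ⟨h, ne_empty_of_mem (mem_filter.1 he).2⟩
  · exact sum_eq_zero fun e _ ↦ if_neg fun h' ↦ h h'.1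

/-- The deviation of the survival probabilities of sets of at most `2 * R` vertices from those of
independent vertices, accumulated over `m` rounds. -/
noncomputable def survivalError (A B b : ℝ) (R m : ℕ) : ℝ :=
  m * ((2 * R) ^ 2 * (B * A + B * A * Real.log b))

namespace RandomCover

/-- The vertices that are neither covered nor expected to be covered later. -/
noncomputable def lost (X : RandomCover μ) (ω : X.Ω) : Finset V :=
  univ \ (X.W ω ∪ univ.biUnion (X.E ω))

theorem lost_start (ω : (start μ).Ω) : (start μ).lost ω = ∅ := by
  simp [lost, start]

/-- Extends a random cover by a round of choices, with law `q ω` conditionally on the outcome `ω` of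
the previous rounds: `x (.inl i)` is chosen for `i`, and the sets `x (.inr u)` are deleted from
`W ω` without being covered. -/
noncomputable def extend (X : RandomCover μ) (q : X.Ω → (ι ⊕ V → Finset V) → ℝ)
    (hq : ∀ ω, q ω ∈ stdSimplex ℝ (ι ⊕ V → Finset V))
    (hqμ : ∀ ω, X.p ω ≠ 0 → ∀ x, q ω x ≠ 0 → ∀ i,
      x (.inl i) = ∅ ∨ (X.E ω i = ∅ ∧ μ i (x (.inl i)) ≠ 0)) : RandomCover μ where
  Ω := X.Ω × (ι ⊕ V → Finset V)
  p y := X.p y.1 * q y.1 y.2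
  W y := X.W y.1 \ univ.biUnion y.2
  E y i := X.E y.1 i ∪ y.2 (.inl i)
  mem_stdSimplex := ⟨fun y ↦ mul_nonneg (X.mem_stdSimplex.1 _) ((hq _).1 _), by
    simp only [Fintype.sum_prod_type, ← mul_sum, (hq _).2, mul_one, X.mem_stdSimplex.2]⟩
  eq_empty_or y hy i := by
    have hp := left_ne_zero_of_mul hy
    rcases hqμ y.1 hp y.2 (right_ne_zero_of_mul hy) i with h | ⟨h, h'⟩
    · simpa only [h, union_empty] using X.eq_empty_or y.1 hp i
    · simpa only [h, empty_union] using .inr h'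

section Extend

variable {X : RandomCover μ} {q : X.Ω → (ι ⊕ V → Finset V) → ℝ}
  {hq : ∀ ω, q ω ∈ stdSimplex ℝ (ι ⊕ V → Finset V)}
  {hqμ : ∀ ω, X.p ω ≠ 0 → ∀ x, q ω x ≠ 0 → ∀ i,
    x (.inl i) = ∅ ∨ (X.E ω i = ∅ ∧ μ i (x (.inl i)) ≠ 0)}

theorem survival_extend (f : Finset V) :
    survival (X.extend q hq hqμ).p (X.extend q hq hqμ).W f =
      ∑ ω with f ⊆ X.W ω, X.p ω * ∑ x with ∀ k, Disjoint f (x k), q ω x := by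
  have hsub (y : X.Ω × (ι ⊕ V → Finset V)) : f ⊆ X.W y.1 \ univ.biUnion y.2 ↔
      f ⊆ X.W y.1 ∧ ∀ k, Disjoint f (y.2 k) := by
    simp [subset_sdiff, disjoint_biUnion_right]
  change ∑ y : X.Ω × (ι ⊕ V → Finset V) with f ⊆ X.W y.1 \ univ.biUnion y.2,
    X.p y.1 * q y.1 y.2 = _
  simp only [hsub, sum_filter, mul_sum, Fintype.sum_prod_type]
  refine sum_congr rfl fun ω _ ↦ ?_
  split_ifs with h <;> simp [h]

theorem abs_survival_extend_sub_le {f : Finset V} {β ε : ℝ}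
    (h : ∀ ω, |∑ x with ∀ k, Disjoint f (x k), q ω x - β| ≤ ε) :
    |survival (X.extend q hq hqμ).p (X.extend q hq hqμ).W f - β * survival X.p X.W f| ≤ ε := by
  have hp := X.mem_stdSimplex
  rw [survival_extend, survival, mul_sum, ← sum_sub_distrib]
  calc |∑ ω with f ⊆ X.W ω, (X.p ω * ∑ x with ∀ k, Disjoint f (x k), q ω x - β * X.p ω)|
      ≤ ∑ ω with f ⊆ X.W ω, X.p ω * ε := (abs_sum_le_sum_abs _ _).trans <|
        sum_le_sum fun ω _ ↦ by
          rw [mul_comm β, ← mul_sub, abs_mul, abs_of_nonneg (hp.1 ω)]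
          exact mul_le_mul_of_nonneg_left (h ω) (hp.1 ω)
    _ ≤ ∑ ω, X.p ω * ε := sum_le_sum_of_subset_of_nonneg (filter_subset _ _) fun ω _ _ ↦
        mul_nonneg (hp.1 ω) ((abs_nonneg _).trans (h ω))
    _ = ε := by rw [← sum_mul, hp.2, one_mul]

theorem lost_extend_subset (ω : X.Ω) (x : ι ⊕ V → Finset V) :
    (X.extend q hq hqμ).lost (ω, x) ⊆ X.lost ω ∪ (X.W ω ∩ wasted x) := fun v hv ↦ by
  have hv : v ∉ X.W ω \ univ.biUnion x ∧ ∀ i, v ∉ X.E ω i ∪ x (.inl i) := by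
    simpa [lost, extend] using hv
  simp only [mem_sdiff, mem_biUnion, mem_univ, true_and, not_and, not_not, mem_union, not_or] at hv
  by_cases hvW : v ∈ X.W ω
  · obtain ⟨i | u, hk⟩ := hv.1 hvW
    · exact absurd hk (hv.2 i).2
    · exact mem_union_right _ (mem_inter.2 ⟨hvW, by
        simpa [wasted] using ⟨fun i ↦ (hv.2 i).2, u, hk⟩⟩)
  · exact mem_union_left _ (by simpa [lost, hvW] using fun i ↦ (hv.2 i).1)

theorem sum_mul_card_lost_extend_le :
    ∑ y, (X.extend q hq hqμ).p y * #((X.extend q hq hqμ).lost y) ≤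
      ∑ ω, X.p ω * #(X.lost ω) + ∑ ω, X.p ω * ∑ x, q ω x * #(X.W ω ∩ wasted x) := by
  have hcard (ω : X.Ω) (x : ι ⊕ V → Finset V) : (#((X.extend q hq hqμ).lost (ω, x)) : ℝ) ≤
      #(X.lost ω) + #(X.W ω ∩ wasted x) := by
    exact_mod_cast (card_le_card (lost_extend_subset ω x)).trans (card_union_le _ _)
  calc ∑ y, (X.extend q hq hqμ).p y * #((X.extend q hq hqμ).lost y)
      ≤ ∑ ω, ∑ x, X.p ω * q ω x * (#(X.lost ω) + #(X.W ω ∩ wasted x)) :=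
        (Fintype.sum_prod_type _).trans_le <| sum_le_sum fun ω _ ↦ sum_le_sum fun x _ ↦
          mul_le_mul_of_nonneg_left (hcard ω x) (mul_nonneg (X.mem_stdSimplex.1 ω) ((hq ω).1 x))
    _ = ∑ ω, X.p ω * #(X.lost ω) + ∑ ω, X.p ω * ∑ x, q ω x * #(X.W ω ∩ wasted x) := by
        simp only [mul_assoc, mul_add, sum_add_distrib, ← mul_sum, ← sum_mul, (hq _).2, one_mul]

end Extend

variable {R : ℕ} {A t b B : ℝ} {τ : ι → ℕ} {j m : ℕ}

theorem exists_next_round (hμ : IsSparse μ R A) (ht : 1 ≤ t) (htB : t ^ R ≤ B) (hBA : B * A < 1)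
    (hb : 1 < b) (X : RandomCover μ) (hX : ∀ ω, X.p ω ≠ 0 → ∀ i, j ≤ τ i → X.E ω i = ∅) :
    ∃ Y : RandomCover μ, (∀ ω, Y.p ω ≠ 0 → ∀ i, j + 1 ≤ τ i → Y.E ω i = ∅) ∧
      (∀ f, |survival Y.p Y.W f - b⁻¹ ^ #f * survival X.p X.W f| ≤
        #f ^ 2 * (B * A + B * A * Real.log b)) ∧
      ∑ ω, Y.p ω * #(Y.lost ω) ≤ ∑ ω, X.p ω * #(X.lost ω) + ∑ ω, X.p ω *
        roundCost (fun i ↦ boost t (X.W ω) (roundFamily μ τ j i)) (X.W ω) R (Real.log b)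
          ((1 - B * A) * Real.log b) := by
  have hw (ω : X.Ω) := (hμ.roundFamily τ j).boost ht htB (X.W ω)
  have hround (ω : X.Ω) := exists_random_round (hw ω).nonneg (hw ω).card_le (hw ω).bound_nonneg hBA
    (hw ω).vertexWeight_le (hw ω).sum_pairWeight_le (Real.log_pos hb) (X.W ω)
  choose q hq hqw hqsurv hqcost using hround
  have hqτ (ω : X.Ω) (x) (hx : q ω x ≠ 0) (i : ι) :
      x (.inl i) = ∅ ∨ τ i = j ∧ μ i (x (.inl i)) ≠ 0 :=
    (hqw ω x hx i).imp_right fun h ↦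
      (ite_ne_right_iff.1 (ne_zero_of_boost_ne_zero h)).imp_left And.left
  refine ⟨X.extend q hq fun ω hω x hx i ↦ (hqτ ω x hx i).imp_right <| And.imp_left fun h ↦
    hX ω hω i h.ge, fun y hy i hi ↦ ?_, fun f ↦ ?_, ?_⟩
  · refine union_eq_empty.2 ⟨hX _ (left_ne_zero_of_mul hy) i (by omega), ?_⟩
    exact (hqτ y.1 y.2 (right_ne_zero_of_mul hy) i).resolve_right fun h ↦ by omega
  · refine abs_survival_extend_sub_le fun ω ↦ ?_
    simpa only [Real.exp_neg, Real.exp_log (one_pos.trans hb)] using hqsurv ω f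
  · exact sum_mul_card_lost_extend_le.trans <| add_le_add_right (sum_le_sum fun ω _ ↦
      mul_le_mul_of_nonneg_left (hqcost ω) (X.mem_stdSimplex.1 ω)) _

theorem exists_after_rounds (hμ : IsSparse μ R A) (hb : 1 < b) (hbB : (b ^ m) ^ R ≤ B)
    (hBA : B * A < 1) {K : ℕ → ℝ} (hK : ∀ k < m, ∀ X : RandomCover μ,
      IsQuasirandom X.p X.W (b ^ k) R B (survivalError A B b R m) → ∑ ω, X.p ω *
        roundCost (fun i ↦ boost (b ^ k) (X.W ω) (roundFamily μ τ k i)) (X.W ω) R (Real.log b)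
          ((1 - B * A) * Real.log b) ≤ K k) :
    ∃ X : RandomCover μ, IsQuasirandom X.p X.W (b ^ m) R B (survivalError A B b R m) ∧
      ∑ ω, X.p ω * #(X.lost ω) ≤ ∑ k ∈ range m, K k := by
  set ε := (2 * R) ^ 2 * (B * A + B * A * Real.log b)
  have hB : 0 ≤ B := (by positivity : (0 : ℝ) ≤ (b ^ m) ^ R).trans hbB
  have hA := hμ.bound_nonneg
  have hlog := Real.log_pos hb
  have : 0 ≤ ε := by positivity
  have quasirandom {X : RandomCover μ} {j : ℕ} (hj : j ≤ m) (hX : ∀ f, #f ≤ 2 * R →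
      |survival X.p X.W f - (b ^ j)⁻¹ ^ #f| ≤ j * ε) : IsQuasirandom X.p X.W (b ^ j) R B
        (survivalError A B b R m) :=
    ⟨X.mem_stdSimplex, one_le_pow₀ hb.le, le_trans (by gcongr; exact hb.le) hbB,
      fun f hf ↦ (hX f hf).trans (by rw [survivalError]; gcongr)⟩
  have rounds (j : ℕ) (hj : j ≤ m) : ∃ X : RandomCover μ,
      (∀ ω, X.p ω ≠ 0 → ∀ i, j ≤ τ i → X.E ω i = ∅) ∧
      (∀ f, #f ≤ 2 * R → |survival X.p X.W f - (b ^ j)⁻¹ ^ #f| ≤ j * ε) ∧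
      ∑ ω, X.p ω * #(X.lost ω) ≤ ∑ k ∈ range j, K k := by
    induction j with
    | zero => exact ⟨start μ, fun _ _ _ _ ↦ rfl, by simp [survival_start], by simp [lost_start]⟩
    | succ j ih =>
      obtain ⟨X, hXτ, hXsurv, hXlost⟩ := ih (by omega)
      have hX := quasirandom (by omega : j ≤ m) hXsurv
      obtain ⟨Y, hYτ, hYsurv, hYlost⟩ := X.exists_next_round hμ hX.one_le hX.pow_le hBA hb hXτ
      refine ⟨Y, hYτ, fun f hf ↦ ?_, ?_⟩
      · have hf2 : (#f : ℝ) ≤ 2 * R := by exact_mod_cast hf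
        have hYf : |survival Y.p Y.W f - b⁻¹ ^ #f * survival X.p X.W f| ≤ ε :=
          (hYsurv f).trans (mul_le_mul_of_nonneg_right (pow_le_pow_left₀ (Nat.cast_nonneg _) hf2 2)
            (by positivity))
        exact abs_sub_inv_pow_succ_pow_le hb.le hYf (hXsurv f hf)
      · rw [sum_range_succ]
        exact hYlost.trans (add_le_add hXlost (hK j (by omega) X hX))
  obtain ⟨X, -, hXsurv, hXlost⟩ := rounds m le_rfl
  exact ⟨X, quasirandom le_rfl hXsurv, hXlost⟩

theorem exists_cover (hμ : ∀ i, μ i ∈ stdSimplex ℝ (Finset V)) (X : RandomCover μ) {K : ℝ}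
    (hK : ∑ v, survival X.p X.W {v} + ∑ ω, X.p ω * #(X.lost ω) ≤ K) :
    ∃ e : ι → Finset V, (∀ i, 0 < μ i (e i)) ∧ (#(univ \ univ.biUnion e) : ℝ) ≤ K := by
  have hW : ∑ ω, X.p ω * #(X.W ω) = ∑ v, survival X.p X.W {v} := by
    simpa [survival] using sum_mul_card_inter X.p univ X.W
  have hcard : ∑ ω, X.p ω * (#(X.W ω) + #(X.lost ω) : ℝ) ≤ K := by
    simpa only [mul_add, sum_add_distrib, hW] using hK
  obtain ⟨ω, hω, hωK⟩ := exists_le_of_sum_mul_le X.mem_stdSimplex hcard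
  choose e₀ he₀ using fun i ↦ exists_pos_of_mem_stdSimplex (hμ i)
  refine ⟨fun i ↦ if X.E ω i = ∅ then e₀ i else X.E ω i, fun i ↦ ?_, le_trans ?_ hωK⟩
  · beta_reduce
    split_ifs with h
    · exact he₀ i
    · exact ((hμ i).1 _).lt_of_ne' ((X.eq_empty_or ω hω i).resolve_left h)
  · have hsub : univ \ (univ.biUnion fun i ↦ if X.E ω i = ∅ then e₀ i else X.E ω i) ⊆
        X.W ω ∪ X.lost ω := fun v hv ↦ by
      have hvE (i : ι) (hi : v ∈ X.E ω i) : False := (mem_sdiff.1 hv).2 <|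
        mem_biUnion.2 ⟨i, mem_univ i, by rwa [if_neg (ne_empty_of_mem hi)]⟩
      by_cases hvW : v ∈ X.W ω
      · exact mem_union_left _ hvW
      · exact mem_union_right _ (by simpa [lost, hvW] using hvE)
    exact_mod_cast (card_le_card hsub).trans (card_union_le _ _)

end RandomCover

end Rounds

section Parameters

/-- Parameters of `m` rounds, each of which divides the survival probability of a vertex by `b`, for
which all the error terms are negligible: the number `B` dominates every parameter except `A⁻¹`,
which is at least a large power of `B`. -/
structure IsAdmissible (A B b M : ℝ) (R m : ℕ) : Prop where
  nonneg : 0 ≤ A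
  eight_le : 8 ≤ B
  mul_pow_le_one : A * B ^ 21 ≤ 1
  one_lt : 1 < b
  log_le : Real.log b ≤ B
  one_le : 1 ≤ M
  le : M ≤ B
  one_le_card : 1 ≤ R
  card_le : R ≤ B
  rounds_le : m ≤ B
  pow_le : (b ^ m) ^ R ≤ B

namespace IsAdmissible

variable {A B b M : ℝ} {R m : ℕ}

theorem pos (h : IsAdmissible A B b M R m) : 0 < B := by linarith [h.eight_le]

theorem pow_mul_le (h : IsAdmissible A B b M R m) {k : ℕ} (hk : k ≤ 21) :
    B ^ k * A ≤ B⁻¹ ^ (21 - k) := by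
  rw [inv_pow, ← one_div, le_div_iff₀ (pow_pos h.pos _), mul_comm, ← mul_assoc, ← pow_add,
    Nat.sub_add_cancel hk, mul_comm]
  exact h.mul_pow_le_one

theorem inv_pow_le (h : IsAdmissible A B b M R m) {k n : ℕ} (hkn : k ≤ n) :
    B⁻¹ ^ n ≤ B⁻¹ ^ k :=
  pow_le_pow_of_le_one (inv_nonneg.2 h.pos.le)
    (inv_le_one_of_one_le₀ (by linarith [h.eight_le])) hkn

theorem mul_lt_one (h : IsAdmissible A B b M R m) : B * A < 1 :=
  calc B * A = B ^ 1 * A := by rw [pow_one]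
    _ ≤ B⁻¹ ^ 20 := h.pow_mul_le (by norm_num)
    _ < 1 := pow_lt_one₀ (inv_nonneg.2 h.pos.le)
        (inv_lt_one_of_one_lt₀ (by linarith [h.eight_le])) (by norm_num)

theorem pow_rounds_le (h : IsAdmissible A B b M R m) : b ^ m ≤ B :=
  (le_self_pow₀ (one_le_pow₀ h.one_lt.le) (Nat.one_le_iff_ne_zero.1 h.one_le_card)).trans h.pow_le

theorem survivalError_nonneg (h : IsAdmissible A B b M R m) : 0 ≤ survivalError A B b R m := by
  have := h.nonneg
  have := h.pos
  have := Real.log_pos h.one_lt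
  rw [survivalError]
  positivity

theorem survivalError_le (h : IsAdmissible A B b M R m) :
    survivalError A B b R m ≤ B ^ 6 * A := by
  have hA := h.nonneg
  have hB := h.pos
  have hl := Real.log_pos h.one_lt
  have hB2 : 4 + 4 * B ≤ B ^ 2 := by nlinarith [h.eight_le]
  calc survivalError A B b R m
      ≤ B * ((2 * B) ^ 2 * (B * A + B * A * B)) := by
        rw [survivalError]
        gcongr
        exacts [h.rounds_le, h.card_le, h.log_le]
    _ = B ^ 4 * A * (4 + 4 * B) := by ring
    _ ≤ B ^ 4 * A * B ^ 2 := by gcongr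
    _ = B ^ 6 * A := by ring

theorem deviation_le (h : IsAdmissible A B b M R m) :
    deviation R A B (survivalError A B b R m) ≤ B⁻¹ ^ 6 := by
  have hA := h.nonneg
  have hB := h.pos
  have hB6 : 4 * B ^ 5 + 1 ≤ B ^ 6 := by
    nlinarith [h.eight_le, one_le_pow₀ (n := 5) (show 1 ≤ B by linarith [h.eight_le])]
  refine Real.sqrt_le_iff.2 ⟨pow_nonneg (inv_nonneg.2 hB.le) 6, ?_⟩
  calc 4 * survivalError A B b R m * B ^ 2 + B ^ 2 * (R * A)
      ≤ 4 * (B ^ 6 * A) * B ^ 2 + B ^ 2 * (B * A) := by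
        gcongr
        exacts [h.survivalError_le, h.card_le]
    _ = B ^ 3 * A * (4 * B ^ 5 + 1) := by ring
    _ ≤ B ^ 3 * A * B ^ 6 := by gcongr
    _ = B ^ 9 * A := by ring
    _ ≤ (B⁻¹ ^ 6) ^ 2 := by
        rw [← pow_mul]
        exact h.pow_mul_le (by norm_num)

theorem roundError_le (h : IsAdmissible A B b M R m) :
    B * A * Real.log b + Real.log b * survivalError A B b R m +
      survivalError A B b R m * B * M + R * (2 * M * deviation R A B (survivalError A B b R m)) ≤
      5 * B⁻¹ ^ 4 := by
  have hA := h.nonneg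
  have hB := h.pos
  have hM := h.one_le
  have hξ := h.survivalError_nonneg
  have hκ : 0 ≤ deviation R A B (survivalError A B b R m) := Real.sqrt_nonneg _
  calc B * A * Real.log b + Real.log b * survivalError A B b R m +
        survivalError A B b R m * B * M + R * (2 * M * deviation R A B (survivalError A B b R m))
      ≤ B * A * B + B * (B ^ 6 * A) + B ^ 6 * A * B * B + B * (2 * B * B⁻¹ ^ 6) := by
        gcongr
        exacts [h.log_le, h.log_le, h.survivalError_le, h.survivalError_le, h.le, h.card_le, h.le,
          h.deviation_le]
    _ = B ^ 2 * A + B ^ 7 * A + B ^ 8 * A + 2 * B⁻¹ ^ 4 := by field_simp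
    _ ≤ B⁻¹ ^ 4 + B⁻¹ ^ 4 + B⁻¹ ^ 4 + 2 * B⁻¹ ^ 4 := by
        gcongr
        all_goals exact (h.pow_mul_le (by norm_num)).trans (h.inv_pow_le (by norm_num))
    _ = 5 * B⁻¹ ^ 4 := by ring

theorem labellingError_le (h : IsAdmissible A B b M R m) :
    (1 + R * b ^ m) * √(2 * A * M * m) ≤ 2 * B⁻¹ ^ 7 := by
  have hA := h.nonneg
  have hB := h.pos
  have hb := one_pos.trans h.one_lt
  have hM := h.one_le
  have hsqrt : √(2 * A * M * m) ≤ B⁻¹ ^ 9 := by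
    refine Real.sqrt_le_iff.2 ⟨pow_nonneg (inv_nonneg.2 hB.le) 9, ?_⟩
    calc 2 * A * M * m ≤ B * A * B * B := by
          gcongr
          exacts [by linarith [h.eight_le], h.le, h.rounds_le]
      _ = B ^ 3 * A := by ring
      _ ≤ (B⁻¹ ^ 9) ^ 2 := by
          rw [← pow_mul]
          exact h.pow_mul_le (by norm_num)
  calc (1 + R * b ^ m) * √(2 * A * M * m) ≤ (B * B + B * B) * B⁻¹ ^ 9 := by
        gcongr
        exacts [by nlinarith [h.eight_le], h.card_le, h.pow_rounds_le]
    _ = 2 * B⁻¹ ^ 7 := by field_simp; norm_num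

theorem error_le (h : IsAdmissible A B b M R m) :
    survivalError A B b R m + m * (B * A * Real.log b + Real.log b * survivalError A B b R m +
      survivalError A B b R m * B * M + R * (2 * M * deviation R A B (survivalError A B b R m))) +
      (1 + R * b ^ m) * √(2 * A * M * m) ≤ B⁻¹ := by
  have hA := h.nonneg
  have hB := h.pos
  have hl := Real.log_pos h.one_lt
  have hM := h.one_le
  have hξ := h.survivalError_nonneg
  have hκ : 0 ≤ deviation R A B (survivalError A B b R m) := Real.sqrt_nonneg _
  have hsq : 8 * B⁻¹ ^ 2 ≤ B⁻¹ := by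
    rw [sq, ← mul_assoc]
    refine mul_le_of_le_one_left (inv_nonneg.2 hB.le) ?_
    rw [← div_eq_mul_inv]
    exact (div_le_one hB).2 h.eight_le
  calc _ ≤ B⁻¹ ^ 2 + B * (5 * B⁻¹ ^ 4) + 2 * B⁻¹ ^ 7 := by
        gcongr ?_ + ?_ * ?_ + ?_
        exacts [h.survivalError_le.trans ((h.pow_mul_le (by norm_num)).trans
          (h.inv_pow_le (by norm_num))), h.rounds_le, h.roundError_le, h.labellingError_le]
    _ = B⁻¹ ^ 2 + 5 * B⁻¹ ^ 3 + 2 * B⁻¹ ^ 7 := by field_simp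
    _ ≤ B⁻¹ ^ 2 + 5 * B⁻¹ ^ 2 + 2 * B⁻¹ ^ 2 := by
        gcongr ?_ + 5 * ?_ + 2 * ?_
        all_goals exact h.inv_pow_le (by norm_num)
    _ = 8 * B⁻¹ ^ 2 := by ring
    _ ≤ B⁻¹ := hsq

end IsAdmissible

end Parameters

section Cover

variable {V ι : Type*} [Fintype V] [Fintype ι]

theorem exists_partial_labelling {a : ι → V → ℝ} {A M : ℝ} (hA : 0 ≤ A)
    (ha : ∀ i v, a i v ∈ Set.Icc 0 A) (hM : ∀ v, ∑ i, a i v ≤ M) {m : ℕ} {q : ℕ → ℝ}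
    (hq : ∀ k, 0 ≤ q k) (hq1 : ∑ k ∈ range m, q k ≤ 1) :
    ∃ τ : ι → ℕ, ∑ k ∈ range m, ∑ v, (∑ i with τ i = k, a i v - q k * ∑ i, a i v) ^ 2 ≤
      2 * A * M * Fintype.card V := by
  set p : ℕ → ℝ := Function.update q m (1 - ∑ k ∈ range m, q k) with hp_def
  have hpq : ∀ k ∈ range m, p k = q k := fun k hk ↦
    Function.update_of_ne (mem_range.1 hk).ne _ _
  have hpm : p m = 1 - ∑ k ∈ range m, q k := Function.update_self ..
  have hp : (fun j : Fin (m + 1) ↦ p j) ∈ stdSimplex ℝ (Fin (m + 1)) := by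
    refine ⟨fun j ↦ ?_, ?_⟩
    · by_cases hj : (j : ℕ) = m
      · simpa [hj, hpm] using hq1
      · simpa [hp_def, hj] using hq j
    · rw [Fin.sum_univ_eq_sum_range, sum_range_succ, sum_congr rfl hpq, hpm, add_sub_cancel]
  obtain ⟨τ, hτ⟩ := exists_balanced_labelling hp a univ
  refine ⟨fun i ↦ τ i, ?_⟩
  calc ∑ k ∈ range m, ∑ v, (∑ i with (τ i : ℕ) = k, a i v - q k * ∑ i, a i v) ^ 2
      ≤ ∑ k ∈ range (m + 1), ∑ v, (∑ i with (τ i : ℕ) = k, a i v - p k * ∑ i, a i v) ^ 2 := by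
        rw [sum_range_succ, sum_congr rfl fun k hk ↦ by rw [← hpq k hk]]
        exact le_add_of_nonneg_right (sum_nonneg fun v _ ↦ sq_nonneg _)
    _ = ∑ v, ∑ j, (∑ i with τ i = j, a i v - p j * ∑ i, a i v) ^ 2 := by
        rw [sum_range, sum_comm]
        simp only [Fin.ext_iff]
    _ ≤ 2 * ∑ i, ∑ v, a i v ^ 2 := by convert hτ
    _ ≤ 2 * ∑ i, ∑ v, A * a i v := by
        gcongr with i _ v
        rw [sq]
        exact mul_le_mul_of_nonneg_right (ha i v).2 (ha i v).1
    _ = 2 * A * ∑ v, ∑ i, a i v := by rw [sum_comm]; simp only [← mul_sum, mul_assoc]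
    _ ≤ 2 * A * ∑ _ : V, M := by gcongr with v; exact hM v
    _ = 2 * A * M * Fintype.card V := by simp; ring

theorem exists_partial_labelling_abs {a : ι → V → ℝ} {A M : ℝ} (hA : 0 ≤ A)
    (ha : ∀ i v, a i v ∈ Set.Icc 0 A) (hM : ∀ v, ∑ i, a i v ≤ M) {m : ℕ} {q : ℕ → ℝ}
    (hq : ∀ k, 0 ≤ q k) (hq1 : ∑ k ∈ range m, q k ≤ 1) :
    ∃ τ : ι → ℕ, ∑ k ∈ range m, ∑ v, |∑ i with τ i = k, a i v - q k * ∑ i, a i v| ≤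
      √(2 * A * M * m) * Fintype.card V := by
  obtain ⟨τ, hτ⟩ := exists_partial_labelling hA ha hM hq hq1
  refine ⟨τ, ?_⟩
  set D : ℕ × V → ℝ := fun x ↦ ∑ i with τ i = x.1, a i x.2 - q x.1 * ∑ i, a i x.2
  have hD : ∑ x ∈ range m ×ˢ univ, D x ^ 2 ≤ 2 * A * M * Fintype.card V := by
    rwa [sum_product]
  calc ∑ k ∈ range m, ∑ v, |D (k, v)| = ∑ x ∈ range m ×ˢ univ, |D x| := by rw [sum_product]
    _ ≤ √(m * Fintype.card V * ∑ x ∈ range m ×ˢ univ, |D x| ^ 2) := by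
        refine Real.le_sqrt_of_sq_le (sq_sum_le_card_mul_sum_sq.trans_eq ?_)
        simp
    _ ≤ √(2 * A * M * m * (Fintype.card V) ^ 2) := by
        refine Real.sqrt_le_sqrt ?_
        simp only [sq_abs]
        calc _ ≤ m * Fintype.card V * (2 * A * M * Fintype.card V) := by gcongr
          _ = _ := by ring
    _ = √(2 * A * M * m) * Fintype.card V := by
        rw [Real.sqrt_mul' _ (sq_nonneg _), Real.sqrt_sq (Nat.cast_nonneg _)]

theorem sum_log_mul_inv_pow_le {b : ℝ} (hb : 1 < b) (m : ℕ) :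
    ∑ k ∈ range m, Real.log b * (b ^ k)⁻¹ ≤ b := by
  have hb0 : 0 < b := one_pos.trans hb
  have hgeom : (∑ k ∈ range m, b⁻¹ ^ k) * (1 - b⁻¹) ≤ 1 := by
    linarith [geom_sum_mul b⁻¹ m, pow_nonneg (inv_nonneg.2 hb0.le) m]
  calc ∑ k ∈ range m, Real.log b * (b ^ k)⁻¹
      = Real.log b * ∑ k ∈ range m, b⁻¹ ^ k := by simp only [mul_sum, inv_pow]
    _ ≤ (b - 1) * ∑ k ∈ range m, b⁻¹ ^ k := mul_le_mul_of_nonneg_right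
        (Real.log_le_sub_one_of_pos hb0) (sum_nonneg fun k _ ↦ pow_nonneg (inv_nonneg.2 hb0.le) k)
    _ = b * ((∑ k ∈ range m, b⁻¹ ^ k) * (1 - b⁻¹)) := by field_simp
    _ ≤ b := mul_le_of_le_one_right hb0.le hgeom

end Cover

section Main

/- `d` is the weight a vertex receives in a round, whose target is the `q`-fraction of the total
weight `S` of the vertex. -/
theorem vertex_cost_le {B C D M S T d l q t α η ξ : ℝ} {R : ℕ} (ht : 1 ≤ t) (htT : t ≤ T)
    (hl : 0 ≤ l) (hα : 0 ≤ α) (hξ : 0 ≤ ξ * B) (hq : 0 ≤ q) (hdM : d ≤ M)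
    (hd : d = q * S + D) (hS : |S - C| ≤ η) (hqC : q * (C + η) = (1 - α) * l * t⁻¹) :
    l * (t⁻¹ + ξ) - (1 - ξ * B) * d + R * (d * t - (1 - α) * l)⁺ ≤
      2 * η * q + (α * l + l * ξ + ξ * B * M) + (1 + R * T) * |D| := by
  have ht0 : 0 < t := one_pos.trans_le ht
  have hT : 0 < T := ht0.trans_le htT
  obtain ⟨hS1, hS2⟩ := abs_le.1 hS
  have hexcess : (d * t - (1 - α) * l)⁺ ≤ T * |D| := by
    refine sup_le ?_ (by positivity)
    calc d * t - (1 - α) * l = (d - (1 - α) * l * t⁻¹) * t := by field_simp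
      _ = (q * (S - C - η) + D) * t := by rw [← hqC, hd]; ring
      _ ≤ |D| * t := by
          gcongr
          linarith [mul_nonneg hq (show 0 ≤ -(S - C - η) by linarith), le_abs_self D]
      _ ≤ T * |D| := by rw [mul_comm]; gcongr
  have hdeficit : l * t⁻¹ - d ≤ 2 * η * q + α * l + |D| :=
    calc l * t⁻¹ - d = q * (C + η - S) + α * l * t⁻¹ - D := by rw [hd]; linarith
      _ ≤ q * (2 * η) + α * l * 1 + |D| := by
          rw [sub_eq_add_neg]
          gcongr
          exacts [by linarith, inv_le_one_of_one_le₀ ht, neg_le_abs D]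
      _ = 2 * η * q + α * l + |D| := by ring
  calc l * (t⁻¹ + ξ) - (1 - ξ * B) * d + R * (d * t - (1 - α) * l)⁺
      = l * t⁻¹ - d + l * ξ + ξ * B * d + R * (d * t - (1 - α) * l)⁺ := by ring
    _ ≤ 2 * η * q + α * l + |D| + l * ξ + ξ * B * M + R * (T * |D|) := by gcongr
    _ = 2 * η * q + (α * l + l * ξ + ξ * B * M) + (1 + R * T) * |D| := by ring

variable {V ι Ω : Type*} [Fintype V] [Fintype ι] [Fintype Ω] {μ : ι → Finset V → ℝ} {p : Ω → ℝ}
  {W : Ω → Finset V} {A B C M T l q t η ξ : ℝ} {R : ℕ}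

theorem sum_mul_roundCost_roundFamily_le (hμ1 : ∀ i, μ i ∈ stdSimplex ℝ (Finset V))
    (hμ : IsSparse μ R A) (hW : IsQuasirandom p W t R B ξ) (hR : 1 ≤ R) (hl : 0 ≤ l)
    (hBA : B * A ≤ 1) (htT : t ≤ T) (hM1 : 1 ≤ M) (hM : ∀ v, ∑ i, vertexWeight (μ i) v ≤ M)
    (hd : ∀ v, |∑ i, vertexWeight (μ i) v - C| ≤ η) (hq : 0 ≤ q)
    (hqC : q * (C + η) = (1 - B * A) * l * t⁻¹) (τ : ι → ℕ) (k : ℕ) :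
    ∑ ω, p ω * roundCost (fun i ↦ boost t (W ω) (roundFamily μ τ k i)) (W ω) R l
        ((1 - B * A) * l) ≤
      (2 * η * q + (B * A * l + l * ξ + ξ * B * M + R * (2 * M * deviation R A B ξ))) *
          Fintype.card V +
        (1 + R * T) *
          ∑ v, |∑ i with τ i = k, vertexWeight (μ i) v - q * ∑ i, vertexWeight (μ i) v| := by
  have hB : 0 ≤ B := zero_le_one.trans hW.one_le_bound
  have hround : ∀ v, ∑ i, vertexWeight (roundFamily μ τ k i) v ≤ M := fun v ↦
    (sum_le_sum fun i _ ↦ vertexWeight_mono (roundFamily_le hμ.nonneg τ k i) v).trans (hM v)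
  refine (sum_mul_roundCost_le hW (hμ.roundFamily τ k)
    (fun i ↦ (sum_le_sum fun e _ ↦ roundFamily_le hμ.nonneg τ k i e).trans_eq (hμ1 i).2)
    (fun i ↦ by simp [roundFamily]) hR hl (mul_nonneg (sub_nonneg.2 hBA) hl) hM1 hround).trans ?_
  have hvertex := sum_le_sum fun v (_ : v ∈ univ) ↦ vertex_cost_le (R := R) hW.one_le htT hl
    (mul_nonneg hB hμ.bound_nonneg) (mul_nonneg hW.error_nonneg hB) hq (hround v)
    (by rw [sum_vertexWeight_roundFamily, add_sub_cancel]) (hd v) hqC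
  simp only [sum_vertexWeight_roundFamily, sum_add_distrib, ← mul_sum, sum_const, card_univ,
    nsmul_eq_mul] at hvertex ⊢
  linarith

/-- The fraction of the total weight assigned to round `k`, which makes up for the vertices expected
to disappear in this round. -/
noncomputable def roundFraction (A B b D : ℝ) (k : ℕ) : ℝ :=
  (1 - B * A) * Real.log b * (b ^ k)⁻¹ / D

theorem IsAdmissible.roundFraction_nonneg {b M D : ℝ} {m : ℕ} (h : IsAdmissible A B b M R m)
    (hD : 0 ≤ D) (k : ℕ) : 0 ≤ roundFraction A B b D k := by
  have := h.mul_lt_one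
  have := Real.log_pos h.one_lt
  have := one_pos.trans h.one_lt
  exact div_nonneg (mul_nonneg (mul_nonneg (by linarith) (by positivity)) (by positivity)) hD

theorem IsAdmissible.sum_roundFraction_le_one {b M D : ℝ} {m : ℕ} (h : IsAdmissible A B b M R m)
    (hD : b ≤ D) : ∑ k ∈ range m, roundFraction A B b D k ≤ 1 := by
  have hb := one_pos.trans h.one_lt
  have hl := Real.log_pos h.one_lt
  have hBA : 0 ≤ B * A := mul_nonneg h.pos.le h.nonneg
  simp only [roundFraction]
  rw [← sum_div, div_le_one (hb.trans_le hD)]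
  calc ∑ k ∈ range m, (1 - B * A) * Real.log b * (b ^ k)⁻¹
      ≤ ∑ k ∈ range m, Real.log b * (b ^ k)⁻¹ := by
        gcongr with k
        exact mul_le_of_le_one_left hl.le (by linarith)
    _ ≤ b := sum_log_mul_inv_pow_le h.one_lt m
    _ ≤ D := hD

theorem exists_cover_of_isAdmissible {b M : ℝ} {m : ℕ} (h : IsAdmissible A B b M R m)
    (hμ1 : ∀ i, μ i ∈ stdSimplex ℝ (Finset V)) (hμ : IsSparse μ R A)
    (hd : ∀ v, |∑ i, vertexWeight (μ i) v - C| ≤ η) (hbC : b ≤ C) (hCM : C + η ≤ M)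
    (hbm : (b ^ m)⁻¹ ≤ η) :
    ∃ e : ι → Finset V, (∀ i, 0 < μ i (e i)) ∧
      (#(univ \ univ.biUnion e) : ℝ) ≤ 4 * η * Fintype.card V := by
  have hb : 0 < b := one_pos.trans h.one_lt
  have hη : 0 ≤ η := (inv_nonneg.2 (pow_nonneg hb.le m)).trans hbm
  have hD : b ≤ C + η := by linarith
  have hD0 : 0 < C + η := hb.trans_le hD
  have hM : ∀ v, ∑ i, vertexWeight (μ i) v ≤ M := fun v ↦ by linarith [(abs_le.1 (hd v)).2]
  have hq := h.roundFraction_nonneg hD0.le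
  have hq1 := h.sum_roundFraction_le_one hD
  obtain ⟨τ, hτ⟩ := exists_partial_labelling_abs h.nonneg
    (fun i v ↦ ⟨vertexWeight_nonneg (hμ.nonneg i) v, hμ.vertexWeight_le i v⟩) hM hq hq1
  obtain ⟨X, hX, hlost⟩ := RandomCover.exists_after_rounds hμ h.one_lt h.pow_le h.mul_lt_one
    fun k hk X hX ↦ sum_mul_roundCost_roundFamily_le hμ1 hμ hX h.one_le_card
      (Real.log_pos h.one_lt).le h.mul_lt_one.le (pow_le_pow_right₀ h.one_lt.le hk.le) h.one_le hM
      hd (hq k) (div_mul_cancel₀ _ hD0.ne') τ k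
  refine X.exists_cover hμ1 ?_
  have herror := h.error_le.trans ((inv_anti₀ (pow_pos hb m) h.pow_rounds_le).trans hbm)
  set ξ := survivalError A B b R m
  refine (add_le_add (hX.sum_survival_singleton_le h.one_le_card) hlost).trans ?_
  set E := B * A * Real.log b + Real.log b * ξ + ξ * B * M + R * (2 * M * deviation R A B ξ)
  set q := roundFraction A B b (C + η)
  set D := fun k v ↦ ∑ i with τ i = k, vertexWeight (μ i) v - q k * ∑ i, vertexWeight (μ i) v
  calc ((b ^ m)⁻¹ + ξ) * Fintype.card V + ∑ k ∈ range m, ((2 * η * q k + E) * Fintype.card V +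
        (1 + R * b ^ m) * ∑ v, |D k v|)
      = ((b ^ m)⁻¹ + ξ + 2 * η * ∑ k ∈ range m, q k + m * E) * Fintype.card V +
          (1 + R * b ^ m) * ∑ k ∈ range m, ∑ v, |D k v| := by
        simp only [sum_add_distrib, ← sum_mul, ← mul_sum, sum_const, card_range, nsmul_eq_mul]
        ring
    _ ≤ (η + ξ + 2 * η * 1 + m * E) * Fintype.card V +
          (1 + R * b ^ m) * (√(2 * A * M * m) * Fintype.card V) := by gcongr
    _ = (3 * η + (ξ + m * E + (1 + R * b ^ m) * √(2 * A * M * m))) * Fintype.card V := by ring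
    _ ≤ (3 * η + η) * Fintype.card V := by gcongr
    _ = 4 * η * Fintype.card V := by ring

end Main

section Finsets

variable {α ι : Type*} {V : Finset α}

/-- The weights of the subsets of `V`, seen as sets of elements of the type `V`. -/
def restrict (V : Finset α) (c : Finset α → ℝ) (e : Finset V) : ℝ :=
  c (e.map (.subtype _))

theorem sum_restrict (V : Finset α) (c : Finset α → ℝ) :
    ∑ e, restrict V c e = ∑ e ∈ V.powerset, c e :=
  sum_bij' (fun e _ ↦ e.map (.subtype _)) (fun e _ ↦ e.subtype (· ∈ V))
    (fun e _ ↦ mem_powerset.2 (map_subtype_subset e)) (by simp)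
    (fun e _ ↦ by ext; simp)
    (fun e he ↦ by rw [subtype_map, filter_true_of_mem (mem_powerset.1 he)]) (by simp [restrict])

theorem vertexWeight_restrict (c : Finset α → ℝ) (v : V) :
    vertexWeight (restrict V c) v = ∑ e ∈ V.powerset with (v : α) ∈ e, c e := by
  rw [sum_filter, ← sum_restrict]
  simp only [vertexWeight, restrict, sum_filter, mem_map, Function.Embedding.subtype_apply,
    SetLike.coe_eq_coe, exists_eq_right]
  congr!

theorem pairWeight_restrict (c : Finset α → ℝ) (v v' : V) :
    pairWeight (restrict V c) v v' =
      ∑ e ∈ V.powerset with (v : α) ∈ e ∧ (v' : α) ∈ e, c e := by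
  rw [sum_filter, ← sum_restrict]
  simp only [pairWeight, restrict, sum_filter, mem_map, Function.Embedding.subtype_apply,
    SetLike.coe_eq_coe, exists_eq_right]
  congr!

theorem card_sdiff_biUnion_map_le {I : Finset ι} (e : I → Finset V) (f : ι → Finset α)
    (hf : ∀ i : I, f i = (e i).map (.subtype _)) :
    #(V \ I.biUnion f) ≤ #(univ \ univ.biUnion e) := by
  rw [← card_map (.subtype (· ∈ V))]
  refine card_le_card fun v hv ↦ ?_
  obtain ⟨hvV, hv⟩ := mem_sdiff.1 hv
  refine mem_map.2 ⟨⟨v, hvV⟩, mem_sdiff.2 ⟨mem_univ _, fun h ↦ hv ?_⟩, rfl⟩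
  obtain ⟨i, -, hi⟩ := mem_biUnion.1 h
  exact mem_biUnion.2 ⟨i, i.2, hf i ▸ mem_map.2 ⟨_, hi, rfl⟩⟩

variable {I : Finset ι} {μ : ι → Finset α → ℝ} {A B C M b η : ℝ} {R m : ℕ}

theorem isSparse_restrict (hA : 0 ≤ A) (hμ : ∀ i ∈ I, 0 ≤ μ i)
    (hcard : ∀ i ∈ I, ∀ e, μ i e ≠ 0 → #e ≤ R)
    (hvertex : ∀ i ∈ I, ∀ v ∈ V, ∑ e ∈ V.powerset with v ∈ e, μ i e ≤ A)
    (hpair : ∀ v ∈ V, ∀ v' ∈ V, v ≠ v' →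
      ∑ i ∈ I, ∑ e ∈ V.powerset with v ∈ e ∧ v' ∈ e, μ i e ≤ A) :
    IsSparse (fun i : I ↦ restrict V (μ i)) R A where
  bound_nonneg := hA
  nonneg i e := hμ i i.2 _
  card_le i e he := card_map (.subtype (· ∈ V)) (s := e) ▸ hcard i i.2 _ he
  vertexWeight_le i v := by
    rw [vertexWeight_restrict]
    exact hvertex i i.2 v v.2
  sum_pairWeight_le v v' hv := by
    simp only [pairWeight_restrict]
    rw [sum_coe_sort I fun i ↦ ∑ e ∈ V.powerset with (v : α) ∈ e ∧ (v' : α) ∈ e, μ i e]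
    exact hpair v v.2 v' v'.2 (Subtype.coe_ne_coe.2 hv)

theorem exists_cover_finset (h : IsAdmissible A B b M R m)
    (hμ : ∀ i ∈ I, (∀ e, 0 ≤ μ i e) ∧ ∑ e ∈ V.powerset, μ i e = 1)
    (hcard : ∀ i ∈ I, ∀ e, μ i e ≠ 0 → #e ≤ R)
    (hvertex : ∀ i ∈ I, ∀ v ∈ V, ∑ e ∈ V.powerset with v ∈ e, μ i e ≤ A)
    (hpair : ∀ v ∈ V, ∀ v' ∈ V, v ≠ v' →
      ∑ i ∈ I, ∑ e ∈ V.powerset with v ∈ e ∧ v' ∈ e, μ i e ≤ A)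
    (hd : ∀ v ∈ V, |∑ i ∈ I, ∑ e ∈ V.powerset with v ∈ e, μ i e - C| ≤ η)
    (hbC : b ≤ C) (hCM : C + η ≤ M) (hbm : (b ^ m)⁻¹ ≤ η) :
    ∃ e : ι → Finset α, (∀ i ∈ I, 0 < μ i (e i)) ∧ (#(V \ I.biUnion e) : ℝ) ≤ 4 * η * #V := by
  obtain ⟨e, he, hcover⟩ := exists_cover_of_isAdmissible (μ := fun i : I ↦ restrict V (μ i)) h
    (fun i ↦ ⟨fun e ↦ (hμ i i.2).1 _, (sum_restrict V (μ i)).trans (hμ i i.2).2⟩)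
    (isSparse_restrict h.nonneg (fun i hi ↦ (hμ i hi).1) hcard hvertex hpair)
    (fun v ↦ by
      simp only [vertexWeight_restrict]
      rw [sum_coe_sort I fun i ↦ ∑ e ∈ V.powerset with (v : α) ∈ e, μ i e]
      exact hd v v.2) hbC hCM hbm
  set f : ι → Finset α := fun i ↦ if hi : i ∈ I then (e ⟨i, hi⟩).map (.subtype _) else ∅ with hf
  refine ⟨f, fun i hi ↦ by simpa [hf, hi, restrict] using he ⟨i, hi⟩, ?_⟩
  calc (#(V \ I.biUnion f) : ℝ) ≤ #(univ \ univ.biUnion e) :=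
        Nat.cast_le.2 (card_sdiff_biUnion_map_le e f (by simp [hf]))
    _ ≤ 4 * η * #V := by
        rw [Fintype.card_coe] at hcover
        convert hcover

theorem exists_forall_mem_pos
    (hμ : ∀ i ∈ I, (∀ e, 0 ≤ μ i e) ∧ ∑ e ∈ V.powerset, μ i e = 1) :
    ∃ e : ι → Finset α, ∀ i ∈ I, 0 < μ i (e i) := by
  have h : ∀ i, ∃ e, i ∈ I → 0 < μ i e := fun i ↦ by
    by_cases hi : i ∈ I
    · obtain ⟨e, -, he⟩ := exists_ne_zero_of_sum_ne_zero ((hμ i hi).2.trans_ne one_ne_zero)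
      exact ⟨e, fun _ ↦ ((hμ i hi).1 e).lt_of_ne' he⟩
    · exact ⟨∅, fun hi' ↦ absurd hi' hi⟩
  choose e he using h
  exact ⟨e, he⟩

end Finsets

section Asymptotics

open Filter Asymptotics

theorem eventually_mul_rpow_add_log_le {θ : ℝ} (hθ : θ < 1) (K : ℝ) {ε : ℝ} (hε : 0 < ε) :
    ∀ᶠ x in atTop, K * (x ^ θ + Real.log x) ≤ ε * x := by
  have hrpow : (fun x : ℝ ↦ x ^ θ) =o[atTop] id := by
    refine isLittleO_of_tendsto' ((eventually_gt_atTop 0).mono fun x hx h ↦ absurd h hx.ne')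
      ((tendsto_rpow_neg_atTop (sub_pos.2 hθ)).congr' ?_)
    filter_upwards [eventually_gt_atTop 0] with x hx
    rw [neg_sub, Real.rpow_sub_one hx.ne', id]
  filter_upwards [((hrpow.add Real.isLittleO_log_id_atTop).const_mul_left K).def hε,
    eventually_ge_atTop 0] with x hx hx0
  simpa [abs_of_nonneg hx0] using (le_abs_self _).trans hx

theorem exists_le_pow_mul_log_le {b x : ℝ} (hb : 1 < b) (hx : 1 ≤ x) :
    ∃ m : ℕ, x ≤ b ^ m ∧ m * Real.log b ≤ Real.log b + Real.log x := by
  have hb0 : 0 < b := one_pos.trans hb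
  obtain ⟨n, hn, hn'⟩ := exists_nat_pow_near hx hb
  refine ⟨n + 1, hn'.le, ?_⟩
  have hlog := Real.log_le_log (pow_pos hb0 n) hn
  rw [Real.log_pow] at hlog
  push_cast
  linarith

theorem eventually_exists_rounds {b θ c : ℝ} (δ : ℝ) (hb : 1 < b) (hθ : θ < 1) (hc : 0 < c) :
    ∀ᶠ x in atTop, ∃ R m : ℕ, 1 ≤ R ∧ x ^ θ / Real.log x ≤ R ∧ R ≤ x ∧ m ≤ x ∧
      x ^ δ * Real.log x ≤ b ^ m ∧ (b ^ m) ^ R ≤ Real.exp (c * x) := by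
  have hlogb := Real.log_pos hb
  set D := |δ| + 1
  have hD : 0 < D := by positivity
  filter_upwards [eventually_mul_rpow_add_log_le hθ (Real.log b + D) hc,
    eventually_mul_rpow_add_log_le hθ (1 + D / Real.log b) one_pos,
    Real.tendsto_log_atTop.eventually_ge_atTop 1, eventually_ge_atTop 1] with x hcx hx hlog hx1
  rw [one_mul] at hx
  have hx0 : 0 < x := one_pos.trans_le hx1
  have hxθ : 0 < x ^ θ := Real.rpow_pos_of_pos hx0 θ
  obtain ⟨m, hm, hm'⟩ := exists_le_pow_mul_log_le hb (Real.one_le_rpow hx1 hD.le)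
  have hround : m * Real.log b ≤ (Real.log b + D) * Real.log x := by
    rw [Real.log_rpow hx0] at hm'
    linarith [le_mul_of_one_le_right hlogb.le hlog]
  set P := x ^ θ / Real.log x with hP_def
  have hP : 0 < P := by positivity
  have hR : (⌈P⌉₊ : ℝ) ≤ P + 1 := (Nat.ceil_lt_add_one hP.le).le
  refine ⟨⌈P⌉₊, m, Nat.one_le_ceil_iff.2 hP, Nat.le_ceil P, ?_, ?_, ?_, ?_⟩
  · calc (⌈P⌉₊ : ℝ) ≤ x ^ θ + Real.log x := hR.trans (add_le_add (div_le_self hxθ.le hlog) hlog)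
      _ ≤ (1 + D / Real.log b) * (x ^ θ + Real.log x) :=
          le_mul_of_one_le_left (by positivity) (le_add_of_nonneg_right (by positivity))
      _ ≤ x := hx
  · calc (m : ℝ) ≤ (Real.log b + D) * Real.log x / Real.log b := (le_div_iff₀ hlogb).2 hround
      _ = (1 + D / Real.log b) * Real.log x := by field_simp
      _ ≤ (1 + D / Real.log b) * (x ^ θ + Real.log x) := by
          gcongr
          exact le_add_of_nonneg_left hxθ.le
      _ ≤ x := hx
  · calc x ^ δ * Real.log x ≤ x ^ |δ| * x := by
          gcongr
          exacts [le_abs_self δ, Real.log_le_self hx0.le]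
      _ = x ^ D := by rw [Real.rpow_add_one hx0.ne']
      _ ≤ b ^ m := hm
  · have : 0 < b := one_pos.trans hb
    rw [← Real.log_le_iff_le_exp (by positivity), Real.log_pow, Real.log_pow]
    calc (⌈P⌉₊ : ℝ) * (m * Real.log b)
        ≤ (P + 1) * ((Real.log b + D) * Real.log x) := by gcongr
      _ = (Real.log b + D) * (x ^ θ + Real.log x) := by rw [hP_def]; field_simp
      _ ≤ c * x := hcx

theorem eventually_isAdmissible {a b θ M : ℝ} (δ : ℝ) (ha : 0 < a) (hb : 1 < b) (hθ : θ < 1)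
    (hM : 1 ≤ M) :
    ∀ᶠ y in atTop, ∃ R m : ℕ, IsAdmissible (y ^ (-a)) (y ^ (a / 21)) b M R m ∧
      Real.log y ^ θ / Real.log (Real.log y) ≤ R ∧
      (b ^ m)⁻¹ ≤ 1 / (Real.log y ^ δ * Real.log (Real.log y)) := by
  have hc : 0 < a / 21 := by positivity
  have hpow := tendsto_rpow_atTop hc
  filter_upwards [Real.tendsto_log_atTop.eventually (eventually_exists_rounds δ hb hθ hc),
    (isLittleO_log_rpow_atTop hc).def one_pos, hpow.eventually_ge_atTop 8,
    hpow.eventually_ge_atTop (Real.log b), hpow.eventually_ge_atTop M, eventually_gt_atTop 0,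
    Real.tendsto_log_atTop.eventually_gt_atTop 1] with y ⟨R, m, hR1, hR, hRx, hmx, hbm, hbmR⟩
      hlog h8 hlogb hMB hy hlogy
  have hlogB : Real.log y ≤ y ^ (a / 21) := by
    rw [one_mul, Real.norm_of_nonneg (Real.rpow_nonneg hy.le _)] at hlog
    exact (le_abs_self _).trans hlog
  have hAB : y ^ (-a) * (y ^ (a / 21)) ^ 21 = 1 := by
    rw [← Real.rpow_mul_natCast hy.le, ← Real.rpow_add hy]
    norm_num
  refine ⟨R, m, ⟨Real.rpow_nonneg hy.le _, h8, hAB.le, hb, hlogb, hM, hMB, hR1, hRx.trans hlogB,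
    hmx.trans hlogB, ?_⟩, hR, ?_⟩
  · rwa [Real.rpow_def_of_pos hy, mul_comm]
  · rw [← one_div]
    have := Real.log_pos hlogy
    exact one_div_le_one_div_of_le (by positivity) hbm

end Asymptotics

end RandomCovering

universe u v

open RandomCovering in
theorem stmt8_general {a b θ : ℝ} (M δ : ℝ) (ha : 0 < a) (hb : 1 < b) (hθ : θ < 1) :
    ∃ y₀ : ℝ, ∀ y : ℝ, y₀ ≤ y →
      ∀ {α : Type u} {ι : Type v} (V : Finset α) (I : Finset ι) (μ : ι → Finset α → ℝ),
        (∀ i ∈ I, (∀ e, 0 ≤ μ i e) ∧ ∑ e ∈ V.powerset, μ i e = 1) →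
        (∀ i ∈ I, ∀ e, μ i e ≠ 0 → (e.card : ℝ) ≤ Real.log y ^ θ / Real.log (Real.log y)) →
        (∀ i ∈ I, ∀ v ∈ V, ∑ e ∈ V.powerset with v ∈ e, μ i e ≤ y ^ (-a)) →
        (∀ v ∈ V, ∀ v' ∈ V, v ≠ v' →
          ∑ i ∈ I, ∑ e ∈ V.powerset with v ∈ e ∧ v' ∈ e, μ i e ≤ y ^ (-a)) →
        ∀ C η : ℝ, b ≤ C → C ≤ M → 1 / (Real.log y ^ δ * Real.log (Real.log y)) ≤ η →
        (∀ v ∈ V, |(∑ i ∈ I, ∑ e ∈ V.powerset with v ∈ e, μ i e) - C| ≤ η) →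
        ∃ e : ι → Finset α, (∀ i ∈ I, 0 < μ i (e i)) ∧
          ((V \ I.biUnion e).card : ℝ) ≤ 4 * η * V.card := by
  obtain ⟨y₀, hy₀⟩ := Filter.eventually_atTop.1 (eventually_isAdmissible δ ha hb hθ
    (le_add_of_nonneg_left (abs_nonneg M)))
  refine ⟨y₀, fun y hy α ι V I μ hμ hcard hvertex hpair C η hbC hCM hη hd ↦ ?_⟩
  obtain ⟨R, m, h, hR, hbm⟩ := hy₀ y hy
  rcases le_total η 1 with hη1 | hη1
  · exact exists_cover_finset h hμ (fun i hi e he ↦ by exact_mod_cast (hcard i hi e he).trans hR)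
      hvertex hpair hd hbC (add_le_add (hCM.trans (le_abs_self M)) hη1) (hbm.trans hη)
  · obtain ⟨e, he⟩ := exists_forall_mem_pos hμ
    have hsub : ((V \ I.biUnion e).card : ℝ) ≤ V.card := by
      exact_mod_cast Finset.card_le_card Finset.sdiff_subset
    exact ⟨e, he, hsub.trans (le_mul_of_one_le_left V.card.cast_nonneg (by linarith))⟩

theorem stmt8 :
    ∃ C₅ : ℝ, 0 < C₅ ∧ ∀ δ : ℝ, 0 < δ → δ ≤ 1/2 → ∃ y₀ : ℝ, ∀ y : ℝ, y₀ ≤ y →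
      ∀ (α : Type) (V : Finset α) (s : ℕ) (μ : ℕ → Finset α → ℝ),
        (V.card : ℝ) ≤ y → 1 ≤ s → (s : ℝ) ≤ y →
        -- each μ i is a probability mass function on the subsets of V
        (∀ i ∈ Finset.Icc 1 s, (∀ e, 0 ≤ μ i e) ∧ (∀ e, μ i e ≠ 0 → e ⊆ V) ∧
          ∑ e ∈ V.powerset, μ i e = 1) →
        -- (1) size bound on the random subsets
        (∀ i ∈ Finset.Icc 1 s, ∀ e, μ i e ≠ 0 →
          (e.card : ℝ) ≤ Real.log y ^ (1/2 : ℝ) / Real.log (Real.log y)) →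
        -- (2) pointwise probability bound
        (∀ i ∈ Finset.Icc 1 s, ∀ v ∈ V,
          ∑ e ∈ V.powerset.filter (fun e => v ∈ e), μ i e ≤ y ^ (-(1/2 : ℝ) - 1/100)) →
        -- (3) pair correlation bound
        (∀ v ∈ V, ∀ v' ∈ V, v ≠ v' →
          ∑ i ∈ Finset.Icc 1 s, ∑ e ∈ V.powerset.filter (fun e => v ∈ e ∧ v' ∈ e), μ i e ≤
            y ^ (-(1/2 : ℝ))) →
        -- (4) near-constant expected covering number
        ∀ C₄ η : ℝ, (10 : ℝ) ^ (2 * δ) ≤ C₄ → C₄ ≤ 100 →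
          1 / (Real.log y ^ δ * Real.log (Real.log y)) ≤ η →
          (∀ v ∈ V,
            |(∑ i ∈ Finset.Icc 1 s, ∑ e ∈ V.powerset.filter (fun e => v ∈ e), μ i e) - C₄| ≤ η) →
        ∃ e : ℕ → Finset α, (∀ i ∈ Finset.Icc 1 s, 0 < μ i (e i)) ∧
          (((V \ (Finset.Icc 1 s).biUnion e).card : ℝ) ≤ C₅ * η * V.card) := by
  refine ⟨4, by norm_num, fun δ hδ _ ↦ ?_⟩
  obtain ⟨y₀, hy₀⟩ := stmt8_general (a := 1 / 2) (b := 10 ^ (2 * δ)) (θ := 1 / 2) 100 δ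
    (by norm_num) (Real.one_lt_rpow (by norm_num) (by positivity)) (by norm_num)
  refine ⟨max 1 y₀, fun y hy α V s μ _ _ _ hμ hcard hvertex ↦ ?_⟩
  exact hy₀ y ((le_max_right _ _).trans hy) V _ μ (fun i hi ↦ ⟨(hμ i hi).1, (hμ i hi).2.2⟩) hcard
    fun i hi v hv ↦ (hvertex i hi v hv).trans
      (Real.rpow_le_rpow_of_exponent_le ((le_max_left _ _).trans hy) (by norm_num))
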